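/- arXiv:2009.05017 — 5 statements merged into one kernel-verified Lean document; each statement's English description precedes it below -/
import Mathlib

section
/- For an extension B ⊆ A of k-algebras and any k-linear section σ of π : A → A/B, the formula d(a₀⊗α₁⊗⋯⊗α_{n−1}⊗a_n) = a₀σ(α₁)⊗α₂⊗⋯⊗α_{n−1}⊗a_n + Σ_{i=1}^{n−2}(−1)^i a₀⊗α₁⊗⋯⊗π(σ(α_i)σ(α_{i+1}))⊗⋯⊗α_{n−1}⊗a_n + (−1)^{n−1} a₀⊗α₁⊗⋯⊗α_{n−2}⊗σ(α_{n−1})a_n descends through the tensor products over B to a well-defined map d : A⊗_B(A/B)^{⊗_B(n−1)}⊗_B A → A⊗_B(A/B)^{⊗_B(n−2)}⊗_B A for every n ≥ 2, and the resulting map is a morphism of A-bimodules. -/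
open scoped TensorProduct
open MulOpposite PiTensorProduct

namespace JZH

variable (k : Type) [Field k]
variable (A : Type) [Ring A] [Algebra k A] (B : Subalgebra k A)

/-- The quotient `B`-bimodule `A/B`. -/
abbrev QM : Type := A ⧸ (Subalgebra.toSubmodule B)

/-- The canonical projection `π : A → A/B`. -/
noncomputable def πQ : A →ₗ[k] QM k A B := (Subalgebra.toSubmodule B).mkQ

/-- The left action of `b ∈ B` on `A/B`, induced by left multiplication. -/
noncomputable def Ql (b : B) : QM k A B →ₗ[k] QM k A B :=
  Submodule.mapQ _ _ (LinearMap.mulLeft k (b : A))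
    (fun a ha => by
      simp only [Submodule.mem_comap, LinearMap.mulLeft_apply, Subalgebra.mem_toSubmodule] at *
      exact B.mul_mem b.2 ha)

/-- The right action of `b ∈ B` on `A/B`, induced by right multiplication. -/
noncomputable def Qr (b : B) : QM k A B →ₗ[k] QM k A B :=
  Submodule.mapQ _ _ (LinearMap.mulRight k (b : A))
    (fun a ha => by
      simp only [Submodule.mem_comap, LinearMap.mulRight_apply, Subalgebra.mem_toSubmodule] at *
      exact B.mul_mem ha b.2)

/-- Merging of two adjacent entries of a tuple, using a given "product". -/
def mergeFun {M : Type} (mul : M → M → M) {n : ℕ} (a : Fin (n+1) → M) (j : Fin n) :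
    Fin n → M := fun l =>
  if (l : ℕ) < (j : ℕ) then a l.castSucc
  else if (l : ℕ) = (j : ℕ) then mul (a l.castSucc) (a l.succ)
  else a l.succ

/-- The ambient space `A ⊗[k] (A/B)^{⊗ n} ⊗[k] A` of the degree-`n` term of the normalised
relative bar resolution. -/
def barAmb (n : ℕ) : Type := A ⊗[k] ((⨂[k] (_ : Fin n), QM k A B) ⊗[k] A)

noncomputable instance barAmbAcg (n : ℕ) : AddCommGroup (barAmb k A B n) :=
  inferInstanceAs (AddCommGroup (A ⊗[k] ((⨂[k] (_ : Fin n), QM k A B) ⊗[k] A)))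

noncomputable instance barAmbMod (n : ℕ) : Module k (barAmb k A B n) :=
  inferInstanceAs (Module k (A ⊗[k] ((⨂[k] (_ : Fin n), QM k A B) ⊗[k] A)))

/-- The balancing relations of `A ⊗_B A` inside `A ⊗[k] A`. -/
def barRel0 : Submodule k (A ⊗[k] A) :=
  Submodule.span k {z : A ⊗[k] A | ∃ (a a' : A) (b : B),
    z = (a * b) ⊗ₜ[k] a' - a ⊗ₜ[k] ((b : A) * a')}

/-- The balancing relations of `A ⊗_B (A/B)^{⊗_B (n+1)} ⊗_B A` inside
`A ⊗[k] (A/B)^{⊗ (n+1)} ⊗[k] A`. -/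
noncomputable def barRel (n : ℕ) : Submodule k (barAmb k A B (n+1)) :=
  Submodule.span k
    ({z | ∃ (a a' : A) (α : Fin (n+1) → QM k A B) (b : B),
        z = (a * b) ⊗ₜ[k] ((tprod k α) ⊗ₜ[k] a')
            - a ⊗ₜ[k] ((tprod k (Function.update α 0 (Ql k A B b (α 0)))) ⊗ₜ[k] a')} ∪
     {z | ∃ (a a' : A) (α : Fin (n+1) → QM k A B) (b : B) (i : Fin n),
        z = a ⊗ₜ[k] ((tprod k (Function.update α i.castSucc
                (Qr k A B b (α i.castSucc)))) ⊗ₜ[k] a')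
            - a ⊗ₜ[k] ((tprod k (Function.update α i.succ (Ql k A B b (α i.succ)))) ⊗ₜ[k] a')} ∪
     {z | ∃ (a a' : A) (α : Fin (n+1) → QM k A B) (b : B),
        z = a ⊗ₜ[k] ((tprod k (Function.update α (Fin.last n)
                (Qr k A B b (α (Fin.last n))))) ⊗ₜ[k] a')
            - a ⊗ₜ[k] ((tprod k α) ⊗ₜ[k] ((b : A) * a'))})

/-- The degree-`n` term `A ⊗_B (A/B)^{⊗_B n} ⊗_B A` of the normalised relative bar
resolution. -/
def BarC : ℕ → Type
  | 0 => (A ⊗[k] A) ⧸ barRel0 k A B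
  | n + 1 => barAmb k A B (n+1) ⧸ barRel k A B n

noncomputable instance BarCacg : ∀ n, AddCommGroup (BarC k A B n)
  | 0 => inferInstanceAs (AddCommGroup (_ ⧸ _))
  | n + 1 => inferInstanceAs (AddCommGroup (_ ⧸ _))

noncomputable instance BarCmod : ∀ n, Module k (BarC k A B n)
  | 0 => inferInstanceAs (Module k (_ ⧸ _))
  | n + 1 => inferInstanceAs (Module k (_ ⧸ _))

/-- Class of an element of `A ⊗[k] A` in `A ⊗_B A`. -/
noncomputable def mkBar0 : (A ⊗[k] A) →ₗ[k] BarC k A B 0 := (barRel0 k A B).mkQ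

/-- Class of an element of the ambient tensor space in the degree-`(n+1)` bar term. -/
noncomputable def mkBar (n : ℕ) : barAmb k A B (n+1) →ₗ[k] BarC k A B (n+1) :=
  (barRel k A B n).mkQ

variable (σ : QM k A B →ₗ[k] A)

/-- Bar differential formula, lowest degree:
`d(a₀ ⊗ α ⊗ a₁) = a₀σ(α) ⊗ a₁ − a₀ ⊗ σ(α)a₁` (before passing to the quotient). -/
noncomputable def barZero (a : A) (α : Fin 1 → QM k A B) (a' : A) : A ⊗[k] A :=
  (a * σ (α 0)) ⊗ₜ[k] a' - a ⊗ₜ[k] (σ (α 0) * a')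

/-- Bar differential formula on elementary tensors (values in the ambient tensor space). -/
noncomputable def barSucc (n : ℕ) (a : A) (α : Fin (n+2) → QM k A B) (a' : A) :
    barAmb k A B (n+1) :=
  (a * σ (α 0)) ⊗ₜ[k] ((tprod k fun i : Fin (n+1) => α i.succ) ⊗ₜ[k] a')
  + ∑ j : Fin (n+1), ((-1 : ℤ) ^ ((j : ℕ) + 1)) •
      (a ⊗ₜ[k] ((tprod k (mergeFun (fun y z => πQ k A B (σ y * σ z)) α j)) ⊗ₜ[k] a'))
  + ((-1 : ℤ) ^ (n + 2)) •
      (a ⊗ₜ[k] ((tprod k fun i : Fin (n+1) => α i.castSucc) ⊗ₜ[k]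
        (σ (α (Fin.last (n+1))) * a')))

/-- `d` is the family of normalised relative bar differentials, for the section `σ`. -/
def IsBarDiff (d : ∀ n, BarC k A B (n+1) →ₗ[k] BarC k A B n) : Prop :=
  (∀ (a : A) (α : Fin 1 → QM k A B) (a' : A),
    d 0 (mkBar k A B 0 (a ⊗ₜ[k] ((tprod k α) ⊗ₜ[k] a'))) =
      mkBar0 k A B (barZero k A B σ a α a')) ∧
  (∀ (n : ℕ) (a : A) (α : Fin (n+2) → QM k A B) (a' : A),
    d (n+1) (mkBar k A B (n+1) (a ⊗ₜ[k] ((tprod k α) ⊗ₜ[k] a'))) =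
      mkBar k A B n (barSucc k A B σ n a α a'))

/-- `μ` is the multiplication augmentation `A ⊗_B A → A`. -/
def IsBarMult (μ : BarC k A B 0 →ₗ[k] A) : Prop :=
  ∀ (a a' : A), μ (mkBar0 k A B (a ⊗ₜ[k] a')) = a * a'

/-- `L` is the family of left multiplications by elements of `A` on the bar resolution. -/
def IsBarLeftAct (L : ∀ (_ : A) (n : ℕ), BarC k A B n →ₗ[k] BarC k A B n) : Prop :=
  (∀ (a a₀ a' : A), L a 0 (mkBar0 k A B (a₀ ⊗ₜ[k] a')) = mkBar0 k A B ((a * a₀) ⊗ₜ[k] a')) ∧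
  (∀ (a : A) (n : ℕ) (a₀ : A) (α : Fin (n+1) → QM k A B) (a' : A),
    L a (n+1) (mkBar k A B n (a₀ ⊗ₜ[k] ((tprod k α) ⊗ₜ[k] a'))) =
      mkBar k A B n ((a * a₀) ⊗ₜ[k] ((tprod k α) ⊗ₜ[k] a')))

/-- `R` is the family of right multiplications by elements of `A` on the bar resolution. -/
def IsBarRightAct (R : ∀ (_ : A) (n : ℕ), BarC k A B n →ₗ[k] BarC k A B n) : Prop :=
  (∀ (a a₀ a' : A), R a 0 (mkBar0 k A B (a₀ ⊗ₜ[k] a')) = mkBar0 k A B (a₀ ⊗ₜ[k] (a' * a))) ∧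
  (∀ (a : A) (n : ℕ) (a₀ : A) (α : Fin (n+1) → QM k A B) (a' : A),
    R a (n+1) (mkBar k A B n (a₀ ⊗ₜ[k] ((tprod k α) ⊗ₜ[k] a'))) =
      mkBar k A B n (a₀ ⊗ₜ[k] ((tprod k α) ⊗ₜ[k] (a' * a))))

end JZH

namespace JZHaux
open JZH Function

section
variable {k A : Type} [Field k] [Ring A] [Algebra k A]

theorem merge_upd {n : ℕ} (w : Fin (n+1) → A) (i : Fin (n+1)) (j : Fin n) :
    ∃ l : Fin n, ∃ g : A →ₗ[k] A, ∀ x, mergeFun (· * ·) (update w i x) j =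
      update (mergeFun (· * ·) w j) l (g x) := by
  rcases lt_trichotomy i.val j.val with h | h | h
  · refine ⟨⟨i, by omega⟩, LinearMap.id, fun x => ?_⟩
    funext l
    simp only [mergeFun, update_apply, Fin.ext_iff, Fin.val_castSucc, Fin.val_succ, LinearMap.id_apply]
    split_ifs <;> first | rfl | omega
  · refine ⟨j, LinearMap.mulRight k (w j.succ), fun x => ?_⟩
    funext l
    simp only [mergeFun, update_apply, Fin.ext_iff, Fin.val_castSucc, Fin.val_succ, LinearMap.mulRight_apply]
    split_ifs <;> first | rfl | omega | (obtain rfl : l = j := Fin.ext (by omega); rfl)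
  · by_cases h' : i.val = j.val + 1
    · refine ⟨j, LinearMap.mulLeft k (w j.castSucc), fun x => ?_⟩
      funext l
      simp only [mergeFun, update_apply, Fin.ext_iff, Fin.val_castSucc, Fin.val_succ, LinearMap.mulLeft_apply]
      split_ifs <;> first | rfl | omega | (obtain rfl : l = j := Fin.ext (by omega); rfl)
    · refine ⟨⟨i - 1, by omega⟩, LinearMap.id, fun x => ?_⟩
      funext l
      simp only [mergeFun, update_apply, Fin.ext_iff, Fin.val_castSucc, Fin.val_succ, LinearMap.id_apply]
      split_ifs <;> first | rfl | omega

theorem merge_bal {n : ℕ} (w : Fin (n+3) → A) (i j : Fin (n+2)) (b : A) (hij : i ≠ j) :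
    ∃ l : Fin (n+1),
      mergeFun (· * ·) (update w i.castSucc (w i.castSucc * b)) j =
        update (mergeFun (· * ·) w j) l.castSucc (mergeFun (· * ·) w j l.castSucc * b) ∧
      mergeFun (· * ·) (update w i.succ (b * w i.succ)) j =
        update (mergeFun (· * ·) w j) l.succ (b * mergeFun (· * ·) w j l.succ) := by
  have hij' : i.val ≠ j.val := fun h => hij (Fin.ext h)
  rcases lt_or_gt_of_ne hij' with h | h
  · obtain ⟨l, rfl⟩ : ∃ l : Fin (n+1), i = l.castSucc := ⟨⟨i, by omega⟩, rfl⟩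
    refine ⟨l, ?_, ?_⟩ <;> funext m <;>
    · simp only [mergeFun, update_apply, Fin.ext_iff, Fin.val_castSucc, Fin.val_succ] at *
      split_ifs <;> first | rfl | (exfalso; omega) | (rw [mul_assoc]; congr 2 <;> congr 1 <;> apply Fin.ext <;> simp <;> omega)  | (congr 2 <;> apply Fin.ext <;> simp <;> omega)
  · obtain ⟨l, rfl⟩ : ∃ l : Fin (n+1), i = l.succ := ⟨⟨i-1, by omega⟩, by ext; simp; omega⟩
    refine ⟨l, ?_, ?_⟩ <;> funext m <;>
    · simp only [mergeFun, update_apply, Fin.ext_iff, Fin.val_castSucc, Fin.val_succ] at *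
      split_ifs <;> first | rfl | (exfalso; omega)| (rw [mul_assoc]; congr 2 <;> congr 1 <;> apply Fin.ext <;> simp <;> omega)  | (congr 2 <;> apply Fin.ext <;> simp <;> omega)

theorem merge_same {n : ℕ} (w : Fin (n+3) → A) (i : Fin (n+2)) (b : A) :
      mergeFun (· * ·) (update w i.castSucc (w i.castSucc * b)) i =
      mergeFun (· * ·) (update w i.succ (b * w i.succ)) i := by
  funext m
  simp only [mergeFun, update_apply, Fin.ext_iff, Fin.val_castSucc, Fin.val_succ] at *
  split_ifs <;> first | rfl | (exfalso; omega) | (obtain rfl : m = i := Fin.ext (by omega); simp [mul_assoc])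

theorem merge_van {n : ℕ} (w : Fin (n+3) → A) (i : Fin (n+1)) :
    ∃ u : Fin (n+2) → A, 
      mergeFun (· * ·) w i.castSucc = update u i.castSucc (u i.castSucc * w i.succ.castSucc) ∧
      mergeFun (· * ·) w i.succ = update u i.succ (w i.succ.castSucc * u i.succ) := by
  refine ⟨fun l => w (i.succ.castSucc.succAbove l), ?_, ?_⟩ <;> funext m <;>
    · simp only [mergeFun, update_apply, Fin.ext_iff, Fin.succAbove, Fin.lt_def, Fin.val_castSucc, Fin.val_succ] at *
      split_ifs <;> first | rfl | (exfalso; omega) | (congr 2 <;> apply Fin.ext <;> simp <;> omega)| (congr 1 <;> apply Fin.ext <;> simp <;> omega)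

end

section
variable {k : Type} [Field k] {A : Type} [Ring A] [Algebra k A] {B : Subalgebra k A}
variable {X : Type} [AddCommGroup X] [Module k X]

/-- Balanced multilinear maps vanishing when an inner entry is in `B`. -/
structure Good (B : Subalgebra k A) {n : ℕ} (T : MultilinearMap k (fun _ : Fin (n+2) => A) X) :
    Prop where
  bal : ∀ (w : Fin (n+2) → A) (i : Fin (n+1)) (b : B),
    T (update w i.castSucc (w i.castSucc * b)) = T (update w i.succ (b * w i.succ))
  van : ∀ (w : Fin (n+2) → A) (i : Fin n), w i.succ.castSucc ∈ B → T w = 0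

noncomputable def face {n : ℕ} (T : MultilinearMap k (fun _ : Fin (n+1) => A) X) (j : Fin (n+1)) :
    MultilinearMap k (fun _ : Fin (n+2) => A) X where
  toFun w := T (mergeFun (· * ·) w j)
  map_update_add' := by
    intro inst w i x y
    obtain rfl : inst = instDecidableEqFin _ := Subsingleton.elim _ _
    obtain ⟨l, g, h⟩ := merge_upd (k := k) w i j
    simp only [h, map_add, MultilinearMap.map_update_add]
  map_update_smul' := by
    intro inst w i c x
    obtain rfl : inst = instDecidableEqFin _ := Subsingleton.elim _ _
    obtain ⟨l, g, h⟩ := merge_upd (k := k) w i j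
    simp only [h, map_smul, MultilinearMap.map_update_smul]

noncomputable def DD {n : ℕ} (T : MultilinearMap k (fun _ : Fin (n+1) => A) X) :
    MultilinearMap k (fun _ : Fin (n+2) => A) X :=
  ∑ j : Fin (n+1), ((-1 : ℤ) ^ (j : ℕ)) • face T j

theorem DD_apply {n : ℕ} (T : MultilinearMap k (fun _ : Fin (n+1) => A) X) (w) :
    DD T w = ∑ j : Fin (n+1), ((-1 : ℤ) ^ (j : ℕ)) • T (mergeFun (· * ·) w j) := by
  simp only [DD, MultilinearMap.sum_apply, MultilinearMap.smul_apply]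
  rfl

theorem Good.DD {n : ℕ} {T : MultilinearMap k (fun _ : Fin (n+2) => A) X} (h : Good B T) :
    Good B (DD T) where
  bal w i b := by
    rw [DD_apply, DD_apply]
    refine Finset.sum_congr rfl fun j _ => ?_
    congr 1
    by_cases hij : i = j
    · subst hij
      rw [merge_same]
    · obtain ⟨l, h1, h2⟩ := merge_bal w i j b hij
      rw [h1, h2, h.bal]
  van w i hi := by
    rw [DD_apply]
    have hne : i.castSucc ≠ i.succ := by simp [Fin.ext_iff]
    rw [Fintype.sum_eq_add i.castSucc i.succ hne]
    · obtain ⟨u, h1, h2⟩ := merge_van w i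
      have := h.bal u i ⟨_, hi⟩
      simp only at this
      rw [h1, h2, this]
      simp [pow_succ]
    · rintro j ⟨hj1, hj2⟩
      have hj1' : j.val ≠ i.val := fun h => hj1 (Fin.ext h)
      have hj2' : j.val ≠ i.val + 1 := fun h => hj2 (Fin.ext h)
      rcases lt_or_gt_of_ne hj1' with hlt | hlt
      · rw [h.van _ ⟨i - 1, by omega⟩, smul_zero]
        convert hi using 1
        simp only [mergeFun, Fin.val_castSucc, Fin.val_succ]
        rw [if_neg (by omega), if_neg (by omega)]
        congr 1
        apply Fin.ext
        simp
        omega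
      · rw [h.van _ ⟨i, by omega⟩, smul_zero]
        convert hi using 1
        simp only [mergeFun, Fin.val_castSucc, Fin.val_succ]
        rw [if_pos (by omega)]
        congr 1

theorem Good.congr {n : ℕ} {T : MultilinearMap k (fun _ : Fin (n+2) => A) X} (h : Good B T)
    (w : Fin (n+2) → A) (i : Fin n) {x y : A} (hxy : πQ k A B x = πQ k A B y) :
    T (update w i.succ.castSucc x) = T (update w i.succ.castSucc y) := by
  have hm : x - y ∈ B := by
    have := (Submodule.Quotient.eq (Subalgebra.toSubmodule B)).1 hxy
    simpa using this
  rw [← sub_eq_zero, ← MultilinearMap.map_update_sub]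
  exact h.van _ i (by simpa using hm)

theorem Ql_pi (b : B) (x : A) : Ql k A B b (πQ k A B x) = πQ k A B (b * x) := rfl
theorem Qr_pi (b : B) (x : A) : Qr k A B b (πQ k A B x) = πQ k A B (x * b) := rfl

/-- full word -/
def W {n : ℕ} (a : A) (x : Fin n → A) (a' : A) : Fin (n+2) → A :=
  Fin.cons (α := fun _ => A) a (Fin.snoc (α := fun _ => A) x a')

theorem W_zero {n : ℕ} (a : A) (x : Fin n → A) (a' : A) : W a x a' 0 = a := rfl
theorem W_mid {n : ℕ} (a : A) (x : Fin n → A) (a' : A) (i : Fin n) :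
    W a x a' i.succ.castSucc = x i := by
  rw [← Fin.succ_castSucc]; simp [W]
theorem W_last {n : ℕ} (a : A) (x : Fin n → A) (a' : A) : W a x a' (Fin.last _) = a' := by
  rw [← Fin.succ_last]; simp [W]

theorem W_ext {n : ℕ} {u v : Fin (n+2) → A} (h0 : u 0 = v 0)
    (hm : ∀ i : Fin n, u i.succ.castSucc = v i.succ.castSucc)
    (hl : u (Fin.last _) = v (Fin.last _)) : u = v := by
  funext i
  refine Fin.lastCases hl (fun i => ?_) i
  exact Fin.cases h0 hm i

theorem W_mid' {n : ℕ} (a : A) (x : Fin n → A) (a' : A) (i : Fin n) :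
    W a x a' i.castSucc.succ = x i := by
  simp [W]

theorem W_upd_zero {n : ℕ} (a c : A) (x : Fin n → A) (a' : A) :
    update (W a x a') 0 c = W c x a' := by
  apply W_ext <;> simp [W_zero, W_mid', W_last, update_apply, Fin.ext_iff]
theorem W_upd_last {n : ℕ} (a c : A) (x : Fin n → A) (a' : A) :
    update (W a x a') (Fin.last _) c = W a x c := by
  apply W_ext <;> simp [W_zero, W_mid', W_last, update_apply, Fin.ext_iff]
  intro i h; omega
theorem W_upd_mid {n : ℕ} (a c : A) (x : Fin n → A) (a' : A) (i : Fin n) :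
    update (W a x a') i.succ.castSucc c = W a (update x i c) a' := by
  apply W_ext <;> simp [W_zero, W_mid', W_last, update_apply, Fin.ext_iff]
  intro h; omega

theorem W_eta {n : ℕ} (w : Fin (n+2) → A) :
    ∃ a x a', w = W (n := n) a x a' :=
  ⟨w 0, fun i => w i.succ.castSucc, w (Fin.last _),
    W_ext rfl (fun i => (W_mid (w 0) (fun i => w i.succ.castSucc) (w (Fin.last _)) i).symm)
      (W_last _ _ _).symm⟩

/-- the class map with the syntactic tensor product as source -/
noncomputable def mkB (B : Subalgebra k A) (n : ℕ) :
    A ⊗[k] ((⨂[k] (_ : Fin (n+1)), QM k A B) ⊗[k] A) →ₗ[k] BarC k A B (n+1) :=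
  mkBar k A B n

/-- the class map as a trilinear map -/
noncomputable def mk3 (B : Subalgebra k A) (n : ℕ) :
    A →ₗ[k] (⨂[k] (_ : Fin (n+1)), QM k A B) →ₗ[k] A →ₗ[k] BarC k A B (n+1) :=
  (TensorProduct.lcurry (RingHom.id k) (⨂[k] (_ : Fin (n+1)), QM k A B) A (BarC k A B (n+1))).comp
    (TensorProduct.curry (mkB B n))

theorem mk3_apply (n : ℕ) (a : A) (t) (a' : A) :
    mk3 B n a t a' = mkBar k A B n (a ⊗ₜ[k] (t ⊗ₜ[k] a')) := rfl

theorem hom_ext {n : ℕ} {f g : BarC k A B (n+1) →ₗ[k] X}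
    (h : ∀ a α a', f (mk3 B n a (tprod k α) a') = g (mk3 B n a (tprod k α) a')) : f = g := by
  apply Submodule.linearMap_qext
  apply TensorProduct.ext
  ext a : 1
  apply TensorProduct.ext
  apply PiTensorProduct.ext
  ext α a'
  exact h a α a'

theorem hom_ext0 {f g : BarC k A B 0 →ₗ[k] X}
    (h : ∀ a a', f (mkBar0 k A B (a ⊗ₜ[k] a')) = g (mkBar0 k A B (a ⊗ₜ[k] a'))) : f = g := by
  apply Submodule.linearMap_qext
  apply TensorProduct.ext
  ext a a'
  exact h a a'

theorem rel1 (n : ℕ) (a a' : A) (α : Fin (n+1) → QM k A B) (b : B) :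
    mk3 B n (a * b) (tprod k α) a' =
      mk3 B n a (tprod k (update α 0 (Ql k A B b (α 0)))) a' := by
  rw [← sub_eq_zero]
  exact (Submodule.Quotient.mk_eq_zero (barRel k A B n)).2
    (Submodule.subset_span (Or.inl (Or.inl ⟨a, a', α, b, rfl⟩)))

theorem rel2 (n : ℕ) (a a' : A) (α : Fin (n+1) → QM k A B) (b : B) (i : Fin n) :
    mk3 B n a (tprod k (update α i.castSucc (Qr k A B b (α i.castSucc)))) a' =
      mk3 B n a (tprod k (update α i.succ (Ql k A B b (α i.succ)))) a' := by
  rw [← sub_eq_zero]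
  exact (Submodule.Quotient.mk_eq_zero (barRel k A B n)).2
    (Submodule.subset_span (Or.inl (Or.inr ⟨a, a', α, b, i, rfl⟩)))

theorem rel3 (n : ℕ) (a a' : A) (α : Fin (n+1) → QM k A B) (b : B) :
    mk3 B n a (tprod k (update α (Fin.last n) (Qr k A B b (α (Fin.last n))))) a' =
      mk3 B n a (tprod k α) (b * a') := by
  rw [← sub_eq_zero]
  exact (Submodule.Quotient.mk_eq_zero (barRel k A B n)).2
    (Submodule.subset_span (Or.inr ⟨a, a', α, b, rfl⟩))

theorem rel0 (a a' : A) (b : B) :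
    mkBar0 k A B ((a * b) ⊗ₜ[k] a') = mkBar0 k A B (a ⊗ₜ[k] (b * a')) := by
  rw [← sub_eq_zero, ← map_sub]
  exact (Submodule.Quotient.mk_eq_zero (barRel0 k A B)).2
    (Submodule.subset_span ⟨a, a', b, rfl⟩)

/-- value of the universal map -/
noncomputable def Tf (B : Subalgebra k A) (n : ℕ) (w : Fin (n+3) → A) : BarC k A B (n+1) :=
  mk3 B n (w 0) (tprod k (fun i : Fin (n+1) => πQ k A B (w i.succ.castSucc))) (w (Fin.last _))

theorem Tf_W (n : ℕ) (a : A) (x : Fin (n+1) → A) (a' : A) :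
    Tf B n (W a x a') = mk3 B n a (tprod k (fun i => πQ k A B (x i))) a' := by
  simp only [Tf, W_zero, W_mid, W_last]

theorem pi_upd {m : ℕ} (x : Fin m → A) (i : Fin m) (c : A) :
    (fun l => πQ k A B (update x i c l)) = update (fun l => πQ k A B (x l)) i (πQ k A B c) := by
  funext l
  by_cases h : l = i
  · subst h; simp
  · simp [h]

theorem idx_cases {n : ℕ} {P : Fin (n+2) → Prop} (h0 : P 0)
    (hm : ∀ i : Fin n, P i.succ.castSucc) (hl : P (Fin.last _)) : ∀ i, P i := by
  intro i
  refine Fin.lastCases hl (fun i => ?_) i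
  exact Fin.cases h0 hm i

noncomputable def Tm (B : Subalgebra k A) (n : ℕ) :
    MultilinearMap k (fun _ : Fin (n+3) => A) (BarC k A B (n+1)) where
  toFun := Tf B n
  map_update_add' := by
    intro inst w i x y
    obtain rfl : inst = instDecidableEqFin _ := Subsingleton.elim _ _
    obtain ⟨a, z, a', rfl⟩ := W_eta w
    revert i
    apply idx_cases
    · simp only [W_upd_zero, Tf_W, map_add, LinearMap.add_apply]
    · intro i
      simp only [W_upd_mid, Tf_W, pi_upd, map_add, MultilinearMap.map_update_add,
        LinearMap.add_apply]
    · simp only [W_upd_last, Tf_W, map_add]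
  map_update_smul' := by
    intro inst w i x y
    obtain rfl : inst = instDecidableEqFin _ := Subsingleton.elim _ _
    obtain ⟨a, z, a', rfl⟩ := W_eta w
    revert i
    apply idx_cases
    · simp only [W_upd_zero, Tf_W, map_smul, LinearMap.smul_apply]
    · intro i
      simp only [W_upd_mid, Tf_W, pi_upd, map_smul, MultilinearMap.map_update_smul,
        LinearMap.smul_apply]
    · simp only [W_upd_last, Tf_W, map_smul]

theorem Tm_W (n : ℕ) (a : A) (x : Fin (n+1) → A) (a' : A) :
    Tm B n (W a x a') = mk3 B n a (tprod k (fun i => πQ k A B (x i))) a' := Tf_W n a x a'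

theorem Tm_apply (n : ℕ) (w : Fin (n+3) → A) :
    Tm B n w = mk3 B n (w 0) (tprod k (fun i : Fin (n+1) => πQ k A B (w i.succ.castSucc)))
      (w (Fin.last _)) := rfl

theorem Tm_good (n : ℕ) : Good B (Tm B n) where
  bal w i b := by
    obtain ⟨a, z, a', rfl⟩ := W_eta w
    revert i
    apply idx_cases
    · have e : (Fin.succ 0 : Fin (n+3)) = (Fin.succ (0 : Fin (n+1))).castSucc := rfl
      rw [e, Fin.castSucc_zero, W_zero, W_mid, W_upd_zero, W_upd_mid, Tm_W, Tm_W, rel1, pi_upd,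
        Ql_pi]
    · intro i
      have e : (i.succ.castSucc.succ : Fin (n+3)) = i.succ.succ.castSucc := rfl
      have e' : (i.succ.castSucc.castSucc : Fin (n+3)) = i.castSucc.succ.castSucc := rfl
      rw [e, e', W_mid, W_mid, W_upd_mid, W_upd_mid, Tm_W, Tm_W, pi_upd, pi_upd, ← Ql_pi, ← Qr_pi]
      exact rel2 n a a' (fun l => πQ k A B (z l)) b i
    · have e : ((Fin.last (n+1)).castSucc : Fin (n+3)) = (Fin.last n).succ.castSucc := rfl
      rw [Fin.succ_last, e, W_mid, W_last, W_upd_mid, W_upd_last, Tm_W, Tm_W, pi_upd, ← Qr_pi]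
      exact rel3 n a a' (fun l => πQ k A B (z l)) b
  van w i hi := by
    have h0 : πQ k A B (w i.succ.castSucc) = 0 :=
      (Submodule.Quotient.mk_eq_zero (Subalgebra.toSubmodule B)).2 hi
    rw [Tm_apply, MultilinearMap.map_coord_zero (tprod k) i h0]
    simp

noncomputable def T0 (B : Subalgebra k A) :
    MultilinearMap k (fun _ : Fin 2 => A) (BarC k A B 0) where
  toFun w := mkBar0 k A B (w 0 ⊗ₜ[k] w 1)
  map_update_add' := by
    intro inst w i x y
    obtain rfl : inst = instDecidableEqFin _ := Subsingleton.elim _ _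
    fin_cases i <;> simp [TensorProduct.add_tmul, TensorProduct.tmul_add]
  map_update_smul' := by
    intro inst w i x y
    obtain rfl : inst = instDecidableEqFin _ := Subsingleton.elim _ _
    fin_cases i <;> simp [← TensorProduct.smul_tmul']

theorem T0_apply (w : Fin 2 → A) : T0 B w = mkBar0 k A B (w 0 ⊗ₜ[k] w 1) := rfl

theorem T0_good : Good B (T0 B) where
  bal w i b := by
    obtain rfl : i = 0 := Fin.ext (by omega)
    have := rel0 (w 0) (w 1) b
    simpa [T0_apply] using this
  van w i := i.elim0

/-- Lifting through the balancing relations. -/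
theorem exists_lift (σ : QM k A B →ₗ[k] A) (hσ : ∀ q, πQ k A B (σ q) = q) {n : ℕ}
    {S : MultilinearMap k (fun _ : Fin (n+3) => A) X} (h : Good B S) :
    ∃ f : BarC k A B (n+1) →ₗ[k] X, ∀ a α a',
      f (mk3 B n a (tprod k α) a') = S (W a (fun i => σ (α i)) a') := by
  let F1 : A →ₗ[k] (⨂[k] (_ : Fin (n+1)), QM k A B) →ₗ[k] A →ₗ[k] X :=
    (PiTensorProduct.lift (R := k) (s := fun _ : Fin (n+1) => QM k A B)
      (E := A →ₗ[k] X)).toLinearMap.comp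
      ((MultilinearMap.compLinearMapₗ (fun _ : Fin (n+1) => σ)).comp
        ((multilinearCurryRightEquiv k (fun _ : Fin (n+2) => A) X).toLinearMap.comp S.curryLeft))
  have hF1 : ∀ a α a', F1 a (tprod k α) a' = S (W a (fun i => σ (α i)) a') := by
    intro a α a'
    simp only [F1, LinearMap.comp_apply, LinearEquiv.coe_coe, PiTensorProduct.lift.tprod]
    rfl
  let F : barAmb k A B (n+1) →ₗ[k] X :=
    (TensorProduct.lift ((TensorProduct.uncurry (RingHom.id k) _ _ _).comp F1) :
      A ⊗[k] ((⨂[k] (_ : Fin (n+1)), QM k A B) ⊗[k] A) →ₗ[k] X)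
  have hF : ∀ a α a', F (a ⊗ₜ[k] ((tprod k α) ⊗ₜ[k] a')) = S (W a (fun i => σ (α i)) a') := hF1
  have hu : ∀ (α : Fin (n+1) → QM k A B) i q, (fun l => σ (update α i q l)) =
      update (fun l => σ (α l)) i (σ q) := by
    intro α i q
    funext l
    by_cases h : l = i
    · subst h; simp
    · simp [h]
  have hl : ∀ (b : B) q, πQ k A B (σ (Ql k A B b q)) = πQ k A B (b * σ q) := by
    intro b q
    rw [hσ, ← Ql_pi, hσ]
  have hr : ∀ (b : B) q, πQ k A B (σ (Qr k A B b q)) = πQ k A B (σ q * b) := by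
    intro b q
    rw [hσ, ← Qr_pi, hσ]
  have hker : barRel k A B n ≤ LinearMap.ker F := by
    refine Submodule.span_le.2 ?_
    rintro z ((⟨a, a', α, b, rfl⟩ | ⟨a, a', α, b, i, rfl⟩) | ⟨a, a', α, b, rfl⟩)
    · refine LinearMap.mem_ker.2 ((map_sub F _ _).trans (sub_eq_zero.2 ?_))
      refine (hF _ _ _).trans (Eq.trans ?_ (hF _ _ _).symm)
      rw [hu, ← W_upd_mid, h.congr _ _ (hl b (α 0))]
      have := h.bal (W a (fun i => σ (α i)) a') 0 b
      have e : (Fin.succ 0 : Fin (n+3)) = (Fin.succ (0 : Fin (n+1))).castSucc := rfl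
      rwa [e, Fin.castSucc_zero, W_zero, W_mid, W_upd_zero] at this
    · refine LinearMap.mem_ker.2 ((map_sub F _ _).trans (sub_eq_zero.2 ?_))
      refine (hF _ _ _).trans (Eq.trans ?_ (hF _ _ _).symm)
      rw [hu, hu, ← W_upd_mid, ← W_upd_mid, h.congr _ _ (hl b (α _)), h.congr _ _ (hr b (α _))]
      have := h.bal (W a (fun i => σ (α i)) a') i.succ.castSucc b
      have e : (i.succ.castSucc.succ : Fin (n+3)) = i.succ.succ.castSucc := rfl
      have e' : (i.succ.castSucc.castSucc : Fin (n+3)) = i.castSucc.succ.castSucc := rfl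
      rwa [e, e', W_mid, W_mid] at this
    · refine LinearMap.mem_ker.2 ((map_sub F _ _).trans (sub_eq_zero.2 ?_))
      refine (hF _ _ _).trans (Eq.trans ?_ (hF _ _ _).symm)
      rw [hu, ← W_upd_mid, h.congr _ _ (hr b (α _))]
      have := h.bal (W a (fun i => σ (α i)) a') (Fin.last _) b
      have e : ((Fin.last (n+1)).castSucc : Fin (n+3)) = (Fin.last n).succ.castSucc := rfl
      rwa [Fin.succ_last, e, W_mid, W_last, W_upd_last] at this
  exact ⟨(barRel k A B n).liftQ F hker, fun a α a' => hF a α a'⟩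

theorem exists_lift0 {S : MultilinearMap k (fun _ : Fin 2 => A) X} (h : Good B S) :
    ∃ f : BarC k A B 0 →ₗ[k] X, ∀ a a', f (mkBar0 k A B (a ⊗ₜ[k] a')) = S ![a, a'] := by
  have u0 : ∀ x a a' : A, update ![a, a'] 0 x = ![x, a'] := by
    intro x a a'
    funext i
    fin_cases i <;> rfl
  have u1 : ∀ x a a' : A, update ![a, a'] 1 x = ![a, x] := by
    intro x a a'
    funext i
    fin_cases i <;> rfl
  let F : A ⊗[k] A →ₗ[k] X := TensorProduct.lift (LinearMap.mk₂ k (fun a a' => S ![a, a'])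
    (fun a c a' => by simpa only [u0] using S.map_update_add ![0, a'] 0 a c)
    (fun r a a' => by simpa only [u0] using S.map_update_smul ![0, a'] 0 r a)
    (fun a a' c => by simpa only [u1] using S.map_update_add ![a, 0] 1 a' c)
    (fun r a a' => by simpa only [u1] using S.map_update_smul ![a, 0] 1 r a'))
  have hker : barRel0 k A B ≤ LinearMap.ker F := by
    refine Submodule.span_le.2 ?_
    rintro z ⟨a, a', b, rfl⟩
    have := h.bal ![a, a'] 0 b
    simp only [SetLike.mem_coe, LinearMap.mem_ker, map_sub, sub_eq_zero]
    simpa [F, u0, u1] using this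
  exact ⟨(barRel0 k A B).liftQ F hker, fun a a' => rfl⟩

theorem Good.left {n : ℕ} {T : MultilinearMap k (fun _ : Fin (n+2) => A) X} (h : Good B T)
    (a : A) : ∃ S : MultilinearMap k (fun _ : Fin (n+2) => A) X, Good B S ∧
      ∀ w, S w = T (update w 0 (a * w 0)) := by
  let S := T.compLinearMap (fun i => if i = 0 then LinearMap.mulLeft k a else LinearMap.id)
  have hS : ∀ w, S w = T (update w 0 (a * w 0)) := by
    intro w
    simp only [S, MultilinearMap.compLinearMap_apply]
    congr 1
    funext i
    by_cases hi : i = 0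
    · subst hi; simp
    · simp [hi]
  refine ⟨S, ⟨fun w i b => ?_, fun w i hi => ?_⟩, hS⟩
  · rw [hS, hS]
    have := h.bal (update w 0 (a * w 0)) i b
    convert this using 2
    · funext l
      grind [update_apply, mul_assoc, Fin.succ_ne_zero, Fin.ext_iff, Fin.val_last, Fin.val_castSucc, Fin.val_succ]
    · funext l
      grind [update_apply, mul_assoc, Fin.succ_ne_zero, Fin.ext_iff, Fin.val_last, Fin.val_castSucc, Fin.val_succ]
  · rw [hS]
    apply h.van _ i
    rw [update_of_ne]
    · exact hi
    · simp [Fin.ext_iff]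

theorem Good.right {n : ℕ} {T : MultilinearMap k (fun _ : Fin (n+2) => A) X} (h : Good B T)
    (a : A) : ∃ S : MultilinearMap k (fun _ : Fin (n+2) => A) X, Good B S ∧
      ∀ w, S w = T (update w (Fin.last _) (w (Fin.last _) * a)) := by
  let S := T.compLinearMap
    (fun i => if i = Fin.last _ then LinearMap.mulRight k a else LinearMap.id)
  have hS : ∀ w, S w = T (update w (Fin.last _) (w (Fin.last _) * a)) := by
    intro w
    simp only [S, MultilinearMap.compLinearMap_apply]
    congr 1
    funext i
    by_cases hi : i = Fin.last _
    · subst hi; simp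
    · simp [hi]
  refine ⟨S, ⟨fun w i b => ?_, fun w i hi => ?_⟩, hS⟩
  · rw [hS, hS]
    have := h.bal (update w (Fin.last _) (w (Fin.last _) * a)) i b
    convert this using 2
    · funext l
      grind [update_apply, mul_assoc, Fin.succ_ne_zero, Fin.ext_iff, Fin.val_last, Fin.val_castSucc, Fin.val_succ]
    · funext l
      grind [update_apply, mul_assoc, Fin.succ_ne_zero, Fin.ext_iff, Fin.val_last, Fin.val_castSucc, Fin.val_succ]
  · rw [hS]
    apply h.van _ i
    rw [update_of_ne]
    · exact hi
    · simp [Fin.ext_iff]; omega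

theorem mkBar_barSucc (σ : QM k A B →ₗ[k] A) (n : ℕ) (a : A) (α : Fin (n+2) → QM k A B) (a' : A) :
    mkBar k A B n (barSucc k A B σ n a α a') =
      mk3 B n (a * σ (α 0)) (tprod k fun i : Fin (n+1) => α i.succ) a'
      + ∑ j : Fin (n+1), ((-1 : ℤ) ^ ((j : ℕ) + 1)) •
          mk3 B n a (tprod k (mergeFun (fun y z => πQ k A B (σ y * σ z)) α j)) a'
      + ((-1 : ℤ) ^ (n + 2)) •
          mk3 B n a (tprod k fun i : Fin (n+1) => α i.castSucc)
            (σ (α (Fin.last (n+1))) * a') := by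
  unfold barSucc
  change mkB B n _ = _
  rw [map_add, map_add, map_sum]
  simp only [map_zsmul]
  rfl

theorem merge_lt {m : ℕ} (w : Fin (m+1) → A) (j l : Fin m) (h : l.val < j.val) :
    mergeFun (· * ·) w j l = w l.castSucc := if_pos h

theorem merge_gt {m : ℕ} (w : Fin (m+1) → A) (j l : Fin m) (h : j.val < l.val) :
    mergeFun (· * ·) w j l = w l.succ := by
  unfold mergeFun
  rw [if_neg (by omega), if_neg (by omega)]

theorem merge_W_zero (n : ℕ) (a : A) (x : Fin (n+2) → A) (a' : A) :
    mergeFun (· * ·) (W a x a') 0 = W (a * x 0) (fun i : Fin (n+1) => x i.succ) a' := by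
  apply W_ext
  · have := W_mid a x a' 0
    simp only [mergeFun, W_zero, Fin.val_zero, lt_irrefl, if_false, if_true, Fin.castSucc_zero]
    rw [← this]
    rfl
  · intro i
    rw [W_mid]
    rw [merge_gt _ _ _ (by simp; try omega)]
    exact W_mid a x a' i.succ
  · rw [W_last]
    rw [merge_gt _ _ _ (by simp; try omega)]
    exact W_last a x a'

theorem merge_W_last (n : ℕ) (a : A) (x : Fin (n+2) → A) (a' : A) :
    mergeFun (· * ·) (W a x a') (Fin.last (n+1)).succ =
      W a (fun i : Fin (n+1) => x i.castSucc) (x (Fin.last _) * a') := by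
  apply W_ext
  · rw [W_zero]
    rw [merge_lt _ _ _ (by simp; try omega)]
    exact W_zero a x a'
  · intro i
    rw [W_mid]
    rw [merge_lt _ _ _ (by simp; try omega)]
    exact W_mid a x a' i.castSucc
  · rw [W_last]
    simp only [mergeFun, Fin.val_last, Fin.val_succ]
    rw [if_neg (by omega), if_pos trivial]
    exact congrArg₂ (· * ·) (W_mid a x a' (Fin.last _)) (W_last a x a')

theorem merge_W_mid (n : ℕ) (a : A) (x : Fin (n+2) → A) (a' : A) (j : Fin (n+1)) :
    mergeFun (· * ·) (W a x a') j.castSucc.succ = W a (mergeFun (· * ·) x j) a' := by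
  apply W_ext
  · rw [W_zero]
    rw [merge_lt _ _ _ (by simp; try omega)]
    exact W_zero a x a'
  · intro i
    rw [W_mid]
    have h1 : W a x a' i.succ.castSucc.castSucc = x i.castSucc := W_mid a x a' i.castSucc
    have h2 : W a x a' i.succ.castSucc.succ = x i.succ := W_mid a x a' i.succ
    simp only [mergeFun, Fin.val_castSucc, Fin.val_succ, h1, h2, Nat.add_lt_add_iff_right,
      Nat.add_right_cancel_iff]
  · rw [W_last]
    rw [merge_gt _ _ _ (by simp; try omega)]
    exact W_last a x a'

theorem DD_W (σ : QM k A B →ₗ[k] A) (hσ : ∀ q, πQ k A B (σ q) = q)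
    (n : ℕ) (a : A) (α : Fin (n+2) → QM k A B) (a' : A) :
    DD (Tm B n) (W a (fun i => σ (α i)) a') = mkBar k A B n (barSucc k A B σ n a α a') := by
  rw [mkBar_barSucc, DD_apply, Fin.sum_univ_succ, Fin.sum_univ_castSucc, ← add_assoc]
  congr 1
  · congr 1
    · have : mergeFun (· * ·) (W a (fun i => σ (α i)) a') 0 =
          W (a * σ (α 0)) (fun i : Fin (n+1) => σ (α i.succ)) a' := by
        exact merge_W_zero _ _ _ _
      rw [this, Tm_W]
      simp [hσ]
    · refine Finset.sum_congr rfl fun j _ => ?_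
      have : mergeFun (· * ·) (W a (fun i => σ (α i)) a') j.castSucc.succ =
          W a (mergeFun (· * ·) (fun i => σ (α i)) j) a' := by
        exact merge_W_mid _ _ _ _ _
      rw [this, Tm_W]
      congr 4
      funext i
      simp only [mergeFun]
      split_ifs <;> simp [hσ]
  · have : mergeFun (· * ·) (W a (fun i => σ (α i)) a') (Fin.last (n+1)).succ =
          W a (fun i : Fin (n+1) => σ (α i.castSucc)) (σ (α (Fin.last _)) * a') := by
      exact merge_W_last _ _ _ _
    rw [this, Tm_W]
    simp [hσ]

theorem DD_W0 (σ : QM k A B →ₗ[k] A) (a : A) (α : Fin 1 → QM k A B) (a' : A) :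
    DD (T0 B) (W a (fun i => σ (α i)) a') = mkBar0 k A B (barZero k A B σ a α a') := by
  rw [DD_apply, Fin.sum_univ_two, barZero, map_sub, sub_eq_add_neg]
  have h1 : W a (fun i => σ (α i)) a' 1 = σ (α 0) := W_mid a (fun i => σ (α i)) a' 0
  have h2 : W a (fun i => σ (α i)) a' 2 = a' := W_last a (fun i => σ (α i)) a'
  simp [T0_apply, mergeFun, W_zero, h1, h2]

end

end JZHaux

/-- For an extension `B ⊆ A` of `k`-algebras and any `k`-linear section `σ` of
`π : A → A/B`, the relative bar differential formula descends through the tensor products over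
`B` to well-defined maps `d : A ⊗_B (A/B)^{⊗_B (n−1)} ⊗_B A → A ⊗_B (A/B)^{⊗_B (n−2)} ⊗_B A`
(for every `n ≥ 2`), and the resulting maps are morphisms of `A`-bimodules, where the
`A`-bimodule structure is by outer multiplication (which also descends). -/
theorem relative_bar_differential_well_defined_and_bimodule_morphism
    (k : Type) [Field k] (A : Type) [Ring A] [Algebra k A] (B : Subalgebra k A)
    (σ : JZH.QM k A B →ₗ[k] A) (hσ : (JZH.πQ k A B).comp σ = LinearMap.id) :
    -- the differential formula induces well-defined maps:
    (∃ d : ∀ n, JZH.BarC k A B (n+1) →ₗ[k] JZH.BarC k A B n, JZH.IsBarDiff k A B σ d) ∧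
    -- the outer `A`-bimodule actions are well defined:
    (∃ L, JZH.IsBarLeftAct k A B L) ∧ (∃ R, JZH.IsBarRightAct k A B R) ∧
    -- any family of maps given by the formula is a morphism of `A`-bimodules:
    (∀ (d : ∀ n, JZH.BarC k A B (n+1) →ₗ[k] JZH.BarC k A B n)
       (L R : ∀ (_ : A) (n : ℕ), JZH.BarC k A B n →ₗ[k] JZH.BarC k A B n),
      JZH.IsBarDiff k A B σ d → JZH.IsBarLeftAct k A B L → JZH.IsBarRightAct k A B R →
      ∀ (a : A) (n : ℕ),
        (d n).comp (L a (n+1)) = (L a n).comp (d n) ∧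
        (d n).comp (R a (n+1)) = (R a n).comp (d n)) := by
  have hσ' : ∀ q, JZH.πQ k A B (σ q) = q := fun q => LinearMap.congr_fun hσ q
  refine ⟨?_, ?_, ?_, ?_⟩
  · obtain ⟨d0, h0⟩ := JZHaux.exists_lift σ hσ' (JZHaux.T0_good (B := B)).DD
    choose d1 h1 using fun n => JZHaux.exists_lift σ hσ' (JZHaux.Tm_good (B := B) n).DD
    refine ⟨fun n => match n with
      | 0 => d0
      | n + 1 => d1 n, ?_, ?_⟩
    · intro a α a'
      exact (h0 a α a').trans (JZHaux.DD_W0 σ a α a')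
    · intro n a α a'
      exact (h1 n a α a').trans (JZHaux.DD_W σ hσ' n a α a')
  · choose S0 g0 e0 using fun a : A => (JZHaux.T0_good (B := B)).left a
    choose S1 g1 e1 using fun (a : A) n => (JZHaux.Tm_good (B := B) n).left a
    choose L0 h0 using fun a : A => JZHaux.exists_lift0 (g0 a)
    choose L1 h1 using fun (a : A) n => JZHaux.exists_lift σ hσ' (g1 a n)
    refine ⟨fun a n => match n with
      | 0 => L0 a
      | n + 1 => L1 a n, ?_, ?_⟩
    · intro a a₀ a'
      refine (h0 a a₀ a').trans ?_
      rw [e0, JZHaux.T0_apply]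
      simp
    · intro a n a₀ α a'
      refine (h1 a n a₀ α a').trans ?_
      rw [e1, JZHaux.W_zero, JZHaux.W_upd_zero, JZHaux.Tm_W]
      simp only [hσ']
      rfl
  · choose S0 g0 e0 using fun a : A => (JZHaux.T0_good (B := B)).right a
    choose S1 g1 e1 using fun (a : A) n => (JZHaux.Tm_good (B := B) n).right a
    choose L0 h0 using fun a : A => JZHaux.exists_lift0 (g0 a)
    choose L1 h1 using fun (a : A) n => JZHaux.exists_lift σ hσ' (g1 a n)
    refine ⟨fun a n => match n with
      | 0 => L0 a
      | n + 1 => L1 a n, ?_, ?_⟩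
    · intro a a₀ a'
      refine (h0 a a₀ a').trans ?_
      rw [e0, JZHaux.T0_apply]
      simp [Function.update_apply]
    · intro a n a₀ α a'
      refine (h1 a n a₀ α a').trans ?_
      rw [e1, JZHaux.W_last, JZHaux.W_upd_last, JZHaux.Tm_W]
      simp only [hσ']
      rfl
  · rintro d L R ⟨hd0, hd⟩ ⟨hL0, hL⟩ ⟨hR0, hR⟩ a n
    have hL' : ∀ n a₀ α a', L a (n+1) (JZHaux.mk3 B n a₀ (tprod k α) a') =
      JZHaux.mk3 B n (a * a₀) (tprod k α) a' := fun n a₀ α a' => hL a n a₀ α a'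
    have hR' : ∀ n a₀ α a', R a (n+1) (JZHaux.mk3 B n a₀ (tprod k α) a') =
      JZHaux.mk3 B n a₀ (tprod k α) (a' * a) := fun n a₀ α a' => hR a n a₀ α a'
    have hd0' : ∀ a₀ α a', d 0 (JZHaux.mk3 B 0 a₀ (tprod k α) a') =
      JZH.mkBar0 k A B (JZH.barZero k A B σ a₀ α a') := hd0
    have hd' : ∀ n a₀ α a', d (n+1) (JZHaux.mk3 B (n+1) a₀ (tprod k α) a') =
      JZH.mkBar k A B n (JZH.barSucc k A B σ n a₀ α a') := hd
    cases n with
    | zero =>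
      constructor
      · apply JZHaux.hom_ext
        intro a₀ α a'
        rw [LinearMap.comp_apply, LinearMap.comp_apply, hL', hd0', hd0']
        simp only [JZH.barZero, map_sub, hL0, mul_assoc]
      · apply JZHaux.hom_ext
        intro a₀ α a'
        rw [LinearMap.comp_apply, LinearMap.comp_apply, hR', hd0', hd0']
        simp only [JZH.barZero, map_sub, hR0, mul_assoc]
    | succ n =>
      constructor
      · apply JZHaux.hom_ext
        intro a₀ α a'
        rw [LinearMap.comp_apply, LinearMap.comp_apply, hL', hd', hd', JZHaux.mkBar_barSucc,
          JZHaux.mkBar_barSucc]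
        simp only [map_add, map_sum, map_zsmul, hL', mul_assoc]
      · apply JZHaux.hom_ext
        intro a₀ α a'
        rw [LinearMap.comp_apply, LinearMap.comp_apply, hR', hd', hd', JZHaux.mkBar_barSucc,
          JZHaux.mkBar_barSucc]
        simp only [map_add, map_sum, map_zsmul, hR', mul_assoc]
end

section
/- For an extension B ⊆ A of k-algebras and an A-bimodule X, the formula b_{A|B}(x⊗α₁⊗⋯⊗α_n) = xσ(α₁)⊗α₂⊗⋯⊗α_n + Σ_{i=1}^{n−1}(−1)^i x⊗α₁⊗⋯⊗π(σ(α_i)σ(α_{i+1}))⊗⋯⊗α_n + (−1)^n σ(α_n)x⊗α₁⊗⋯⊗α_{n−1} induces, for every n ≥ 1, a well-defined k-linear map b_{A|B} : X⊗_{B^e}(A/B)^{⊗_B n} → X⊗_{B^e}(A/B)^{⊗_B(n−1)} (with target X_B = X/⟨bx−xb⟩ for n = 1); these maps satisfy b_{A|B}∘b_{A|B} = 0 and do not depend on the choice of the k-linear section σ of π. -/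
open scoped TensorProduct
open MulOpposite PiTensorProduct

namespace JZH

variable (k : Type) [Field k]
variable (A : Type) [Ring A] [Algebra k A] (B : Subalgebra k A)
variable (X : Type) [AddCommGroup X] [Module k X]
  [Module A X] [Module Aᵐᵒᵖ X] [SMulCommClass A Aᵐᵒᵖ X]
  [IsScalarTower k A X] [IsScalarTower k Aᵐᵒᵖ X]

/-- Degree-`n` term of the Hochschild chain complex of `A` with coefficients in `X`. -/
def CH : ℕ → Type
  | 0 => X
  | n + 1 => X ⊗[k] (⨂[k] (_ : Fin (n+1)), A)

noncomputable instance CHacg : ∀ n, AddCommGroup (CH k A X n)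
  | 0 => inferInstanceAs (AddCommGroup X)
  | n + 1 => inferInstanceAs (AddCommGroup (X ⊗[k] (⨂[k] (_ : Fin (n+1)), A)))

noncomputable instance CHmod : ∀ n, Module k (CH k A X n)
  | 0 => inferInstanceAs (Module k X)
  | n + 1 => inferInstanceAs (Module k (X ⊗[k] (⨂[k] (_ : Fin (n+1)), A)))

/-- The Hochschild boundary formula in lowest degree: `b(x ⊗ a) = x·a − a·x`. -/
def hochZero (x : X) (a : Fin 1 → A) : CH k A X 0 :=
  (op (a 0) • x) - (a 0 • x)

/-- The Hochschild boundary formula on elementary tensors,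
`b(x ⊗ a₁ ⊗ ⋯ ⊗ a_{n+2}) = x·a₁ ⊗ a₂ ⊗ ⋯ + Σ (−1)^i x ⊗ ⋯ ⊗ a_i a_{i+1} ⊗ ⋯ +
(−1)^{n+2} a_{n+2}·x ⊗ a₁ ⊗ ⋯ ⊗ a_{n+1}`. -/
noncomputable def hochSucc (n : ℕ) (x : X) (a : Fin (n+2) → A) : CH k A X (n+1) :=
  (op (a 0) • x) ⊗ₜ[k] (tprod k fun i : Fin (n+1) => a i.succ)
  + ∑ j : Fin (n+1), ((-1 : ℤ) ^ ((j : ℕ) + 1)) •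
      (x ⊗ₜ[k] (tprod k (mergeFun (fun y z => y * z) a j)))
  + ((-1 : ℤ) ^ (n + 2)) •
      ((a (Fin.last (n+1)) • x) ⊗ₜ[k] (tprod k fun i : Fin (n+1) => a i.castSucc))

/-- `d` is the family of Hochschild differentials of `A` with coefficients in `X`. -/
def IsHochschildDiff (d : ∀ n, CH k A X (n+1) →ₗ[k] CH k A X n) : Prop :=
  (∀ (x : X) (a : Fin 1 → A), d 0 (x ⊗ₜ[k] tprod k a) = hochZero k A X x a) ∧
  (∀ (n : ℕ) (x : X) (a : Fin (n+2) → A),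
    d (n+1) (x ⊗ₜ[k] tprod k a) = hochSucc k A X n x a)

/-- Degree-`n` term of the Hochschild chain complex of the subalgebra `B` with
coefficients in `X`. -/
def CHB : ℕ → Type
  | 0 => X
  | n + 1 => X ⊗[k] (⨂[k] (_ : Fin (n+1)), B)

noncomputable instance CHBacg : ∀ n, AddCommGroup (CHB k A B X n)
  | 0 => inferInstanceAs (AddCommGroup X)
  | n + 1 => inferInstanceAs (AddCommGroup (X ⊗[k] (⨂[k] (_ : Fin (n+1)), B)))

noncomputable instance CHBmod : ∀ n, Module k (CHB k A B X n)
  | 0 => inferInstanceAs (Module k X)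
  | n + 1 => inferInstanceAs (Module k (X ⊗[k] (⨂[k] (_ : Fin (n+1)), B)))

/-- Hochschild boundary formula for `B`, lowest degree. -/
def hochBZero (x : X) (b : Fin 1 → B) : CHB k A B X 0 :=
  (op ((b 0 : A)) • x) - ((b 0 : A) • x)

/-- Hochschild boundary formula for `B` on elementary tensors. -/
noncomputable def hochBSucc (n : ℕ) (x : X) (b : Fin (n+2) → B) : CHB k A B X (n+1) :=
  (op ((b 0 : A)) • x) ⊗ₜ[k] (tprod k fun i : Fin (n+1) => b i.succ)
  + ∑ j : Fin (n+1), ((-1 : ℤ) ^ ((j : ℕ) + 1)) •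
      (x ⊗ₜ[k] (tprod k (mergeFun (fun y z => y * z) b j)))
  + ((-1 : ℤ) ^ (n + 2)) •
      (((b (Fin.last (n+1)) : A) • x) ⊗ₜ[k] (tprod k fun i : Fin (n+1) => b i.castSucc))

/-- `d` is the family of Hochschild differentials of `B` with coefficients in `X`. -/
def IsHochschildDiffB (d : ∀ n, CHB k A B X (n+1) →ₗ[k] CHB k A B X n) : Prop :=
  (∀ (x : X) (b : Fin 1 → B), d 0 (x ⊗ₜ[k] tprod k b) = hochBZero k A B X x b) ∧
  (∀ (n : ℕ) (x : X) (b : Fin (n+2) → B),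
    d (n+1) (x ⊗ₜ[k] tprod k b) = hochBSucc k A B X n x b)

/-- The subspace of `X` spanned by the commutators `b·x − x·b`, `b ∈ B`;
the quotient is `X_B`. -/
def commRel : Submodule k X :=
  Submodule.span k {z : X | ∃ (b : B) (x : X), z = (b : A) • x - op (b : A) • x}

/-- The balancing relations defining `X ⊗_{Bᵉ} (A/B)^{⊗_B (n+1)}` inside
`X ⊗[k] (A/B)^{⊗[k] (n+1)}`. -/
def relRel (n : ℕ) : Submodule k (X ⊗[k] (⨂[k] (_ : Fin (n+1)), QM k A B)) :=
  Submodule.span k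
    ({z | ∃ (x : X) (α : Fin (n+1) → QM k A B) (b : B),
        z = (op (b : A) • x) ⊗ₜ[k] tprod k α
            - x ⊗ₜ[k] tprod k (Function.update α 0 (Ql k A B b (α 0)))} ∪
     {z | ∃ (x : X) (α : Fin (n+1) → QM k A B) (b : B) (i : Fin n),
        z = x ⊗ₜ[k] tprod k (Function.update α i.castSucc (Qr k A B b (α i.castSucc)))
            - x ⊗ₜ[k] tprod k (Function.update α i.succ (Ql k A B b (α i.succ)))} ∪
     {z | ∃ (x : X) (α : Fin (n+1) → QM k A B) (b : B),
        z = x ⊗ₜ[k] tprod k (Function.update α (Fin.last n) (Qr k A B b (α (Fin.last n))))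
            - ((b : A) • x) ⊗ₜ[k] tprod k α})

/-- Degree-`n` term of the relative Hochschild chain complex `C_*(A|B,X)`:
`X_B` in degree `0` and `X ⊗_{Bᵉ} (A/B)^{⊗_B n}` in degree `n ≥ 1`. -/
def RC : ℕ → Type
  | 0 => X ⧸ commRel k A B X
  | n + 1 => (X ⊗[k] (⨂[k] (_ : Fin (n+1)), QM k A B)) ⧸ relRel k A B X n

noncomputable instance RCacg : ∀ n, AddCommGroup (RC k A B X n)
  | 0 => inferInstanceAs (AddCommGroup (_ ⧸ _))
  | n + 1 => inferInstanceAs (AddCommGroup (_ ⧸ _))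

noncomputable instance RCmod : ∀ n, Module k (RC k A B X n)
  | 0 => inferInstanceAs (Module k (_ ⧸ _))
  | n + 1 => inferInstanceAs (Module k (_ ⧸ _))

/-- Class of an element of `X ⊗[k] (A/B)^{⊗ (n+1)}` in the relative chain module. -/
noncomputable def mkRC (n : ℕ) :
    (X ⊗[k] (⨂[k] (_ : Fin (n+1)), QM k A B)) →ₗ[k] RC k A B X (n+1) :=
  (relRel k A B X n).mkQ

/-- Class of an element of `X` in `X_B`. -/
noncomputable def mkXB : X →ₗ[k] RC k A B X 0 := (commRel k A B X).mkQ

variable (σ : QM k A B →ₗ[k] A)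

/-- Relative Hochschild boundary formula, lowest degree:
`b(x ⊗ α) = x·σ(α) − σ(α)·x` (with values in `X`, before passing to `X_B`). -/
def relZero (x : X) (α : Fin 1 → QM k A B) : X :=
  (op (σ (α 0)) • x) - (σ (α 0) • x)

/-- Relative Hochschild boundary formula on elementary tensors (values in
`X ⊗[k] (A/B)^{⊗(n+1)}`, before passing to the quotient). -/
noncomputable def relSucc (n : ℕ) (x : X) (α : Fin (n+2) → QM k A B) :
    X ⊗[k] (⨂[k] (_ : Fin (n+1)), QM k A B) :=
  (op (σ (α 0)) • x) ⊗ₜ[k] (tprod k fun i : Fin (n+1) => α i.succ)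
  + ∑ j : Fin (n+1), ((-1 : ℤ) ^ ((j : ℕ) + 1)) •
      (x ⊗ₜ[k] (tprod k (mergeFun (fun y z => πQ k A B (σ y * σ z)) α j)))
  + ((-1 : ℤ) ^ (n + 2)) •
      ((σ (α (Fin.last (n+1))) • x) ⊗ₜ[k] (tprod k fun i : Fin (n+1) => α i.castSucc))

/-- `d` is the family of relative Hochschild differentials, for the section `σ`. -/
def IsRelDiff (d : ∀ n, RC k A B X (n+1) →ₗ[k] RC k A B X n) : Prop :=
  (∀ (x : X) (α : Fin 1 → QM k A B),
    d 0 (mkRC k A B X 0 (x ⊗ₜ[k] tprod k α)) = mkXB k A B X (relZero k A B X σ x α)) ∧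
  (∀ (n : ℕ) (x : X) (α : Fin (n+2) → QM k A B),
    d (n+1) (mkRC k A B X (n+1) (x ⊗ₜ[k] tprod k α)) =
      mkRC k A B X n (relSucc k A B X σ n x α))

/-- The chain map `κ : C_*(A,X) → C_*(A|B,X)` induced by `π`. -/
noncomputable def κmap : ∀ n, CH k A X n →ₗ[k] RC k A B X n
  | 0 => mkXB k A B X
  | n + 1 => (mkRC k A B X n).comp
      (TensorProduct.map LinearMap.id (PiTensorProduct.map fun _ => πQ k A B))

/-- The chain map `ι : C_*(B,X) → C_*(A,X)` induced by the inclusion `B ⊆ A`. -/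
noncomputable def ιmap : ∀ n, CHB k A B X n →ₗ[k] CH k A X n
  | 0 => LinearMap.id
  | n + 1 => TensorProduct.map LinearMap.id (PiTensorProduct.map fun _ => B.val.toLinearMap)

end JZH

namespace JZH
section comb
variable {k : Type} [Field k]
variable {A : Type} [Ring A] [Algebra k A]
variable {X : Type} [AddCommGroup X] [Module k X]
  [Module A X] [Module Aᵐᵒᵖ X] [SMulCommClass A Aᵐᵒᵖ X]
  [IsScalarTower k A X] [IsScalarTower k Aᵐᵒᵖ X]

def fX (n i : ℕ) (x : X) (a : ℕ → A) : X :=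
  if i = 0 then op (a 0) • x else if i = n + 1 then a n • x else x

def fA (i : ℕ) (a : ℕ → A) (l : ℕ) : A :=
  if l + 1 < i then a l else if l + 1 = i then a l * a (l+1) else a (l+1)

/-- right multiplication at slot `j` -/
def LX (j : ℕ) (b : A) (x : X) : X := if j = 0 then op b • x else x
def LA (j : ℕ) (b : A) (a : ℕ → A) (l : ℕ) : A := if l + 1 = j then a l * b else a l
/-- left multiplication at slot `j` -/
def RX (n j : ℕ) (b : A) (x : X) : X := if j = n then b • x else x
def RA (j : ℕ) (b : A) (a : ℕ → A) (l : ℕ) : A := if l = j then b * a l else a l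

def delA (j : ℕ) (a : ℕ → A) (l : ℕ) : A := if l < j then a l else a (l+1)

lemma fA_fA (i j : ℕ) (h : j < i) (a : ℕ → A) (l : ℕ) :
    fA j (fA i a) l = fA (i-1) (fA j a) l := by
  obtain ⟨i, rfl⟩ : ∃ t, i = t + 1 := ⟨i - 1, by omega⟩
  simp only [fA, Nat.add_sub_cancel]
  split_ifs <;> first | rfl | (exfalso; omega) | (simp [mul_assoc])

lemma fX_fX (n i j : ℕ) (h : j < i) (hi : i ≤ n + 2) (x : X) (a : ℕ → A) :
    fX n j (fX (n+1) i x a) (fA i a) = fX n (i-1) (fX (n+1) j x a) (fA j a) := by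
  obtain ⟨i, rfl⟩ : ∃ t, i = t + 1 := ⟨i - 1, by omega⟩
  simp only [fX, fA, Nat.add_sub_cancel]
  split_ifs <;> first | rfl | (exfalso; omega) | skip
  all_goals subst_vars
  all_goals simp [mul_smul, smul_comm]

lemma fA_LA_eq (n j : ℕ) (b : A) (a : ℕ → A) (l : ℕ) (hl : l < n) :
    fA j (LA j b a) l = fA j (RA j b a) l := by
  simp only [fA, LA, RA]
  split_ifs <;> first | rfl | (exfalso; omega) | (simp [mul_assoc])

lemma fX_LA_eq (n j : ℕ) (hj : j ≤ n + 1) (b : A) (x : X) (a : ℕ → A) :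
    fX n j (LX j b x) (LA j b a) = fX n j (RX (n+1) j b x) (RA j b a) := by
  simp only [fX, LX, RX, LA, RA]
  split_ifs <;> first | rfl | (exfalso; omega) | skip
  all_goals subst_vars
  all_goals simp [mul_smul, smul_comm]

lemma fA_LA_lt (i j : ℕ) (h : j < i) (b : A) (a : ℕ → A) (l : ℕ) :
    fA i (LA j b a) l = LA j b (fA i a) l := by
  simp only [fA, LA]
  split_ifs <;> first | rfl | (exfalso; omega) | (simp [mul_assoc])
lemma fA_RA_lt (i j : ℕ) (h : j < i) (b : A) (a : ℕ → A) (l : ℕ) :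
    fA i (RA j b a) l = RA j b (fA i a) l := by
  simp only [fA, RA]
  split_ifs <;> first | rfl | (exfalso; omega) | (simp [mul_assoc])
lemma fA_LA_gt (i j : ℕ) (h : i < j) (b : A) (a : ℕ → A) (l : ℕ) :
    fA i (LA j b a) l = LA (j-1) b (fA i a) l := by
  obtain ⟨j, rfl⟩ : ∃ t, j = t + 1 := ⟨j - 1, by omega⟩
  simp only [fA, LA, Nat.add_sub_cancel]
  split_ifs <;> first | rfl | (exfalso; omega) | (simp [mul_assoc])
lemma fA_RA_gt (i j : ℕ) (h : i < j) (b : A) (a : ℕ → A) (l : ℕ) :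
    fA i (RA j b a) l = RA (j-1) b (fA i a) l := by
  obtain ⟨j, rfl⟩ : ∃ t, j = t + 1 := ⟨j - 1, by omega⟩
  simp only [fA, RA, Nat.add_sub_cancel]
  split_ifs <;> first | rfl | (exfalso; omega) | (simp [mul_assoc])

lemma fX_L_lt (n i j : ℕ) (h : j < i) (hi : i ≤ n + 1) (b : A) (x : X) (a : ℕ → A) :
    fX n i (LX j b x) (LA j b a) = LX j b (fX n i x a) := by
  simp only [fX, LX, LA]
  split_ifs <;> first | rfl | (exfalso; omega) | skip
  all_goals subst_vars
  all_goals simp [mul_smul, smul_comm]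
lemma fX_R_lt (n i j : ℕ) (h : j < i) (hi : i ≤ n + 1) (b : A) (x : X) (a : ℕ → A) :
    fX n i (RX (n+1) j b x) (RA j b a) = RX n j b (fX n i x a) := by
  simp only [fX, RX, RA]
  split_ifs <;> first | rfl | (exfalso; omega) | skip
  all_goals subst_vars
  all_goals simp [mul_smul, smul_comm]
lemma fX_L_gt (n i j : ℕ) (h : i < j) (hi : j ≤ n + 1) (b : A) (x : X) (a : ℕ → A) :
    fX n i (LX j b x) (LA j b a) = LX (j-1) b (fX n i x a) := by
  obtain ⟨j, rfl⟩ : ∃ t, j = t + 1 := ⟨j - 1, by omega⟩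
  simp only [fX, LX, LA, Nat.add_sub_cancel]
  split_ifs <;> first | rfl | (exfalso; omega) | skip
  all_goals subst_vars
  all_goals simp [mul_smul, smul_comm]
lemma fX_R_gt (n i j : ℕ) (h : i < j) (hi : j ≤ n + 1) (b : A) (x : X) (a : ℕ → A) :
    fX n i (RX (n+1) j b x) (RA j b a) = RX n (j-1) b (fX n i x a) := by
  obtain ⟨j, rfl⟩ : ∃ t, j = t + 1 := ⟨j - 1, by omega⟩
  simp only [fX, RX, RA, Nat.add_sub_cancel]
  split_ifs <;> first | rfl | (exfalso; omega) | skip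
  all_goals subst_vars
  all_goals simp [mul_smul, smul_comm]

lemma fX_del_l (n j : ℕ) (h : j ≤ n) (x : X) (a : ℕ → A) :
    fX n j x a = LX j (a j) x := by
  simp only [fX, LX]
  split_ifs <;> first | rfl | (exfalso; omega) | skip
  all_goals subst_vars
  all_goals simp [mul_smul, smul_comm]
lemma fX_del_r (n j : ℕ) (h : j ≤ n) (x : X) (a : ℕ → A) :
    fX n (j+1) x a = RX n j (a j) x := by
  simp only [fX, RX]
  split_ifs <;> first | rfl | (exfalso; omega) | skip
  all_goals subst_vars
  all_goals simp [mul_smul, smul_comm]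
lemma fA_del_l (j : ℕ) (a : ℕ → A) (l : ℕ) :
    fA j a l = LA j (a j) (delA j a) l := by
  simp only [fA, LA, delA]
  split_ifs <;> first | rfl | (exfalso; omega) | skip
  all_goals subst_vars
  all_goals simp
lemma fA_del_r (j : ℕ) (a : ℕ → A) (l : ℕ) :
    fA (j+1) a l = RA j (a j) (delA j a) l := by
  simp only [fA, RA, delA]
  split_ifs <;> first | rfl | (exfalso; omega) | skip
  all_goals subst_vars
  all_goals simp

lemma sum_cancel {M : Type} [AddCommGroup M] (N : ℕ) (H : ℕ → ℕ → M)
    (hH : ∀ i j, j < i → i < N + 1 → H i j = H j (i-1)) :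
    ∑ i ∈ Finset.range (N+1), (-1:ℤ)^i • ∑ j ∈ Finset.range N, (-1:ℤ)^j • H i j = 0 := by
  simp only [Finset.smul_sum, smul_smul, ← pow_add]
  rw [← Finset.sum_product']
  refine Finset.sum_involution
    (fun p _ => if p.2 < p.1 then (p.2, p.1 - 1) else (p.2 + 1, p.1)) ?_ ?_ ?_ ?_
  · rintro ⟨i, j⟩ hp
    simp only [Finset.mem_product, Finset.mem_range] at hp
    by_cases h : j < i
    · simp only [h, if_true]
      rw [hH i j h hp.1]
      obtain ⟨i, rfl⟩ : ∃ t, i = t + 1 := ⟨i - 1, by omega⟩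
      rw [Nat.add_sub_cancel, show i + 1 + j = (j + i) + 1 by omega, pow_succ]
      simp
    · simp only [h, if_false]
      rw [hH (j+1) i (by omega) (by omega)]
      rw [Nat.add_sub_cancel, show j + 1 + i = (i + j) + 1 by omega, pow_succ]
      simp
  · rintro ⟨i, j⟩ hp _
    simp only
    split_ifs <;> simp <;> omega
  · rintro ⟨i, j⟩ hp
    simp only [Finset.mem_product, Finset.mem_range] at hp
    simp only [Finset.mem_product, Finset.mem_range]
    split_ifs <;> simp <;> omega
  · rintro ⟨i, j⟩ hp
    simp only
    split_ifs <;> simp_all <;> omega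
end comb
end JZH

namespace JZH
section main
variable (k : Type) [Field k]
variable (A : Type) [Ring A] [Algebra k A] (B : Subalgebra k A)
variable (X : Type) [AddCommGroup X] [Module k X]
  [Module A X] [Module Aᵐᵒᵖ X] [SMulCommClass A Aᵐᵒᵖ X]
  [IsScalarTower k A X] [IsScalarTower k Aᵐᵒᵖ X]

noncomputable def K : ∀ (n : ℕ) (_ : ℕ → A), X →ₗ[k] RC k A B X n
  | 0, _ => mkXB k A B X
  | n + 1, a => (mkRC k A B X n).comp
      ((TensorProduct.mk k X (⨂[k] (_ : Fin (n+1)), QM k A B)).flip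
        (tprod k fun i : Fin (n+1) => πQ k A B (a i)))

lemma K_succ (n : ℕ) (a : ℕ → A) (x : X) :
    K k A B X (n+1) a x = mkRC k A B X n (x ⊗ₜ[k] tprod k fun i : Fin (n+1) => πQ k A B (a i)) :=
  rfl

lemma K_congr_pi (n : ℕ) (a a' : ℕ → A) (h : ∀ l < n, πQ k A B (a l) = πQ k A B (a' l)) :
    K k A B X n a = K k A B X n a' := by
  cases n with
  | zero => rfl
  | succ n =>
    ext x
    rw [K_succ, K_succ]
    congr 3
    funext i
    exact h i i.2

lemma K_congr (n : ℕ) (a a' : ℕ → A) (h : ∀ l < n, a l = a' l) :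
    K k A B X n a = K k A B X n a' :=
  K_congr_pi k A B X n a a' fun l hl => by rw [h l hl]

lemma pi_update (n p : ℕ) (hp : p < n + 1) (a : ℕ → A) (u : A) :
    (fun i : Fin (n+1) => πQ k A B (Function.update a p u i)) =
      Function.update (fun i : Fin (n+1) => πQ k A B (a i)) ⟨p, hp⟩ (πQ k A B u) := by
  funext i
  by_cases h : i = ⟨p, hp⟩
  · subst h; simp
  · have : (i : ℕ) ≠ p := fun h' => h (Fin.ext h')
    simp [Function.update_of_ne h, Function.update_of_ne this]

lemma K_update_add (n p : ℕ) (hp : p < n) (a : ℕ → A) (u v : A) (x : X) :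
    K k A B X n (Function.update a p (u + v)) x =
      K k A B X n (Function.update a p u) x + K k A B X n (Function.update a p v) x := by
  cases n with
  | zero => omega
  | succ n =>
    simp only [K_succ, pi_update k A B n p hp, map_add, MultilinearMap.map_update_add,
      TensorProduct.tmul_add]

lemma K_update_smul (n p : ℕ) (hp : p < n) (a : ℕ → A) (c : k) (u : A) (x : X) :
    K k A B X n (Function.update a p (c • u)) x =
      c • K k A B X n (Function.update a p u) x := by
  cases n with
  | zero => omega
  | succ n =>
    simp only [K_succ, pi_update k A B n p hp, map_smul, MultilinearMap.map_update_smul,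
      TensorProduct.tmul_smul]

lemma πQ_mem (b : A) (hb : b ∈ B) : πQ k A B b = 0 := by
  simp [πQ, hb]

lemma K_mem (n p : ℕ) (hp : p < n) (a : ℕ → A) (h : a p ∈ B) (x : X) :
    K k A B X n a x = 0 := by
  cases n with
  | zero => omega
  | succ n =>
    have h0 : (tprod k fun i : Fin (n+1) => πQ k A B (a i)) = 0 :=
      (PiTensorProduct.tprod k).map_coord_zero (⟨p, hp⟩ : Fin (n+1)) (πQ_mem k A B _ h)
    rw [K_succ, h0]
    simp

lemma Ql_pi (b : B) (a : A) : Ql k A B b (πQ k A B a) = πQ k A B (b * a) := rfl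
lemma Qr_pi (b : B) (a : A) : Qr k A B b (πQ k A B a) = πQ k A B (a * b) := rfl

lemma mkRC_eq (n : ℕ) (y z : X ⊗[k] (⨂[k] (_ : Fin (n+1)), QM k A B))
    (h : y - z ∈ relRel k A B X n) : mkRC k A B X n y = mkRC k A B X n z :=
  (Submodule.Quotient.eq _).2 h

lemma LA_eq (n : ℕ) (b : A) (a : ℕ → A) (j : ℕ) : LA (j+1) b a = Function.update a j (a j * b) := by
  funext l
  by_cases h : l = j
  · subst h; simp [LA]
  · simp [LA, h]
lemma RA_eq (n : ℕ) (b : A) (a : ℕ → A) (j : ℕ) : RA j b a = Function.update a j (b * a j) := by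
  funext l
  by_cases h : l = j
  · subst h; simp [RA]
  · simp [RA, h]

lemma K_bal (n j : ℕ) (hj : j ≤ n) (b : B) (a : ℕ → A) (x : X) :
    K k A B X n (LA j (b : A) a) (LX j (b : A) x) =
      K k A B X n (RA j (b : A) a) (RX n j (b : A) x) := by
  cases n with
  | zero =>
    obtain rfl : j = 0 := by omega
    simp only [LX, RX, if_true]
    symm
    exact (Submodule.Quotient.eq _).2 (Submodule.subset_span ⟨b, x, rfl⟩)
  | succ n =>
    rw [K_succ, K_succ]
    apply mkRC_eq
    apply Submodule.subset_span
    rcases Nat.eq_zero_or_pos j with rfl | hj0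
    · left; left
      refine ⟨x, fun i => πQ k A B (a i), b, ?_⟩
      have h0 : LA 0 (b : A) a = a := by funext l; simp [LA]
      rw [h0, RA_eq A n, pi_update k A B n 0 (by omega)]
      simp [LX, RX, Ql_pi]
    · obtain ⟨j, rfl⟩ : ∃ t, j = t + 1 := ⟨j - 1, by omega⟩
      rcases Nat.lt_or_ge j n with h | h
      · left; right
        refine ⟨x, fun i => πQ k A B (a i), b, ⟨j, h⟩, ?_⟩
        rw [RA_eq A n, LA_eq A n, pi_update k A B n j (by omega), pi_update k A B n (j+1) (by omega)]
        simp [LX, RX, Ql_pi, Qr_pi, h.ne]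
      · obtain rfl : j = n := by omega
        right
        refine ⟨x, fun i => πQ k A B (a i), b, ?_⟩
        rw [LA_eq A j, pi_update k A B j j (by omega)]
        have h0 : (fun i : Fin (j+1) => πQ k A B (RA (j+1) (b : A) a i)) =
            fun i : Fin (j+1) => πQ k A B (a i) := by
          funext i
          have := i.2
          simp [RA, this.ne]
        rw [h0]
        simp [LX, RX, Qr_pi, Fin.last]

noncomputable def G (n i : ℕ) (a : ℕ → A) (x : X) : RC k A B X n :=
  K k A B X n (fA i a) (fX n i x a)

lemma op_smul_k (c : k) (u : A) (x : X) : (op u) • (c • x) = c • ((op u) • x) := smul_comm _ _ _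
lemma smul_k (c : k) (u : A) (x : X) : u • (c • x) = c • (u • x) := smul_comm _ _ _

noncomputable def actL : A →ₗ[k] X →ₗ[k] X :=
  LinearMap.mk₂ k (fun u x => u • x) (by intros; rw [add_smul]) (by intros; rw [smul_assoc])
    (by intros; rw [smul_add]) (by intros; rw [smul_k])
noncomputable def actR : A →ₗ[k] X →ₗ[k] X :=
  LinearMap.mk₂ k (fun u x => op u • x) (by intros; rw [op_add, add_smul])
    (by intros; rw [op_smul, smul_assoc])
    (by intros; rw [smul_add]) (by intros; rw [op_smul_k])

lemma G_add (n i : ℕ) (a : ℕ → A) (x y : X) :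
    G k A B X n i a (x + y) = G k A B X n i a x + G k A B X n i a y := by
  simp only [G, fX]
  split_ifs <;> simp
lemma G_smul (n i : ℕ) (a : ℕ → A) (c : k) (x : X) :
    G k A B X n i a (c • x) = c • G k A B X n i a x := by
  simp only [G, fX]
  split_ifs <;> simp [op_smul_k, smul_k]

lemma G_update (n i l : ℕ) (hi : i ≤ n + 1) (hl : l ≤ n) (a : ℕ → A) :
    (∃ g : A →ₗ[k] X →ₗ[k] X, ∀ (u : A) (x : X), G k A B X n i (Function.update a l u) x =
      K k A B X n (fA i a) (g u x)) ∨
    (∃ p < n, ∃ g : A →ₗ[k] A, ∀ (u : A) (x : X), G k A B X n i (Function.update a l u) x =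
      K k A B X n (Function.update (fA i a) p (g u)) (fX n i x a)) := by
  by_cases h1 : i = 0 ∧ l = 0
  · obtain ⟨rfl, rfl⟩ := h1
    left
    refine ⟨actR k A X, fun u x => ?_⟩
    rw [G, K_congr k A B X n _ (fA 0 a)]
    · simp [fX, actR]
    · intro l hl; simp [fA]
  by_cases h2 : i = n + 1 ∧ l = n
  · obtain ⟨rfl, rfl⟩ := h2
    left
    refine ⟨actL k A X, fun u x => ?_⟩
    rw [G, K_congr k A B X l _ (fA (l+1) a)]
    · simp [fX, actL]
    · intro t ht; simp [fA, ht, ht.ne]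
  right
  have key : ∀ (u : A) (x : X), fX n i x (Function.update a l u) = fX n i x a := by
    intro u x
    simp only [fX]
    split_ifs with c1 c2
    · rw [Function.update_of_ne (by omega)]
    · rw [Function.update_of_ne (by omega)]
    · rfl
  rcases Nat.lt_trichotomy (l+1) i with h | h | h
  · refine ⟨l, by omega, LinearMap.id, fun u x => ?_⟩
    rw [G, key, K_congr]
    intro t ht
    simp only [fA, Function.update_apply]
    split_ifs <;> first | rfl | (exfalso; omega)
  · refine ⟨l, by omega, LinearMap.mulRight k (a (l+1)), fun u x => ?_⟩
    rw [G, key, K_congr]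
    intro t ht
    simp only [fA, Function.update_apply]
    split_ifs <;> subst_vars <;> first | rfl | (exfalso; omega)
  · obtain ⟨l, rfl⟩ : ∃ t, l = t + 1 := ⟨l - 1, by omega⟩
    by_cases h' : l + 1 = i
    · refine ⟨l, by omega, LinearMap.mulLeft k (a l), fun u x => ?_⟩
      rw [G, key, K_congr]
      intro t ht
      simp only [fA, Function.update_apply]
      split_ifs <;> first | (exfalso; omega) | skip
      all_goals first | rfl | (obtain rfl : t = l := by omega); rfl
    · refine ⟨l, by omega, LinearMap.id, fun u x => ?_⟩
      rw [G, key, K_congr]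
      intro t ht
      simp only [fA, Function.update_apply]
      split_ifs <;> first | rfl | (exfalso; omega)

lemma G_update_add (n i l : ℕ) (hi : i ≤ n + 1) (hl : l ≤ n) (a : ℕ → A) (u v : A) (x : X) :
    G k A B X n i (Function.update a l (u + v)) x =
      G k A B X n i (Function.update a l u) x + G k A B X n i (Function.update a l v) x := by
  rcases G_update k A B X n i l hi hl a with ⟨g, hg⟩ | ⟨p, hp, g, hg⟩
  · simp [hg]
  · simp only [hg, map_add, K_update_add k A B X n p hp]

lemma G_update_smul (n i l : ℕ) (hi : i ≤ n + 1) (hl : l ≤ n) (a : ℕ → A) (c : k) (u : A) (x : X) :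
    G k A B X n i (Function.update a l (c • u)) x =
      c • G k A B X n i (Function.update a l u) x := by
  rcases G_update k A B X n i l hi hl a with ⟨g, hg⟩ | ⟨p, hp, g, hg⟩
  · simp [hg]
  · simp only [hg, map_smul, K_update_smul k A B X n p hp]

noncomputable def F (n : ℕ) (a : ℕ → A) (x : X) : RC k A B X n :=
  ∑ i ∈ Finset.range (n+2), (-1 : ℤ)^i • G k A B X n i a x

lemma F_add (n : ℕ) (a : ℕ → A) (x y : X) :
    F k A B X n a (x + y) = F k A B X n a x + F k A B X n a y := by
  simp only [F, G_add, smul_add, Finset.sum_add_distrib]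
lemma F_smul (n : ℕ) (a : ℕ → A) (c : k) (x : X) :
    F k A B X n a (c • x) = c • F k A B X n a x := by
  simp only [F, G_smul, Finset.smul_sum]
  exact Finset.sum_congr rfl fun i _ => smul_comm _ _ _

lemma F_update_add (n l : ℕ) (hl : l ≤ n) (a : ℕ → A) (u v : A) (x : X) :
    F k A B X n (Function.update a l (u + v)) x =
      F k A B X n (Function.update a l u) x + F k A B X n (Function.update a l v) x := by
  simp only [F]
  rw [← Finset.sum_add_distrib]
  refine Finset.sum_congr rfl fun i hi => ?_
  rw [Finset.mem_range] at hi
  rw [G_update_add k A B X n i l (by omega) hl, smul_add]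

lemma F_update_smul (n l : ℕ) (hl : l ≤ n) (a : ℕ → A) (c : k) (u : A) (x : X) :
    F k A B X n (Function.update a l (c • u)) x = c • F k A B X n (Function.update a l u) x := by
  simp only [F]
  rw [Finset.smul_sum]
  refine Finset.sum_congr rfl fun i hi => ?_
  rw [Finset.mem_range] at hi
  rw [G_update_smul k A B X n i l (by omega) hl, smul_comm]

lemma F_mem (n l : ℕ) (hl : l ≤ n) (a : ℕ → A) (h : a l ∈ B) (x : X) :
    F k A B X n a x = 0 := by
  rw [F, Finset.sum_eq_add (l) (l+1) (by omega)]
  · have h1 : G k A B X n l a x = K k A B X n (LA l (a l) (delA l a)) (LX l (a l) x) := by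
      rw [G, fX_del_l n l hl, funext (fA_del_l l a)]
    have h2 : G k A B X n (l+1) a x = K k A B X n (RA l (a l) (delA l a)) (RX n l (a l) x) := by
      rw [G, fX_del_r n l hl, funext (fA_del_r l a)]
    rw [h1, h2, K_bal k A B X n l hl ⟨a l, h⟩, pow_succ]
    simp
  · intro i hi ⟨hi1, hi2⟩
    rw [Finset.mem_range] at hi
    rw [G]
    rcases Nat.lt_or_ge i l with h' | h'
    · rw [K_mem k A B X n (l-1) (by omega), smul_zero]
      obtain ⟨l, rfl⟩ : ∃ t, l = t + 1 := ⟨l - 1, by omega⟩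
      simp only [fA, Nat.add_sub_cancel]
      rw [if_neg (by omega), if_neg (by omega)]
      exact h
    · rw [K_mem k A B X n l (by omega), smul_zero]
      simp only [fA]
      rw [if_pos (by omega)]
      exact h
  · intro h; rw [Finset.mem_range] at h; omega
  · intro h; rw [Finset.mem_range] at h; omega

lemma πQ_eq {u v : A} (h : πQ k A B u = πQ k A B v) : u - v ∈ B := by
  have := (Submodule.Quotient.eq (Subalgebra.toSubmodule B)).1 h
  simpa using this

lemma F_congr (n : ℕ) (a a' : ℕ → A) (h : ∀ l ≤ n, a l = a' l) (x : X) :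
    F k A B X n a x = F k A B X n a' x := by
  refine Finset.sum_congr rfl fun i hi => ?_
  rw [Finset.mem_range] at hi
  have h1 : K k A B X n (fA i a) = K k A B X n (fA i a') := by
    apply K_congr
    intro l hl
    simp only [fA]
    rw [h l (by omega), h (l+1) (by omega)]
  have h2 : fX n i x a = fX n i x a' := by
    simp only [fX]
    rw [h 0 (by omega), h n (by omega)]
  rw [G, G, h1, h2]

lemma F_congr_pi (n : ℕ) (a a' : ℕ → A) (h : ∀ l ≤ n, πQ k A B (a l) = πQ k A B (a' l)) (x : X) :
    F k A B X n a x = F k A B X n a' x := by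
  have key : ∀ m ≤ n + 1, F k A B X n (fun l => if l < m then a' l else a l) x =
      F k A B X n a x := by
    intro m
    induction m with
    | zero => intro _; simp
    | succ m ih =>
      intro hm
      rw [← ih (by omega)]
      set hh : ℕ → A := fun l => if l < m then a' l else a l with hhdef
      have e1 : (fun l => if l < m + 1 then a' l else a l) =
          Function.update hh m (a m + (a' m - a m)) := by
        funext l
        simp only [hhdef, Function.update_apply, add_sub_cancel]
        split_ifs <;> first | rfl | (exfalso; omega) | (subst_vars; rfl)
      have e2 : Function.update hh m (a m) = hh := by
        apply Function.update_eq_self_iff.2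
        simp [hhdef]
      rw [e1, F_update_add k A B X n m (by omega), e2,
        F_mem k A B X n m (by omega) (Function.update hh m (a' m - a m)), add_zero]
      simpa using πQ_eq k A B (h m (by omega)).symm
  rw [← key (n+1) le_rfl]
  apply F_congr
  intro l hl
  rw [if_pos (by omega)]

lemma F_bal (n j : ℕ) (hj : j ≤ n + 1) (b : B) (a : ℕ → A) (x : X) :
    F k A B X n (LA j (b : A) a) (LX j (b : A) x) =
      F k A B X n (RA j (b : A) a) (RX (n+1) j (b : A) x) := by
  refine Finset.sum_congr rfl fun i hi => ?_
  rw [Finset.mem_range] at hi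
  congr 1
  rw [G, G]
  rcases Nat.lt_trichotomy j i with h | h | h
  · rw [funext (fA_LA_lt i j h _ a), funext (fA_RA_lt i j h _ a), fX_L_lt n i j h (by omega),
      fX_R_lt n i j h (by omega), K_bal k A B X n j (by omega)]
  · subst h
    rw [fX_LA_eq n j hj, K_congr]
    exact fun l hl => fA_LA_eq n j _ a l hl
  · rw [funext (fA_LA_gt i j h _ a), funext (fA_RA_gt i j h _ a), fX_L_gt n i j h (by omega),
      fX_R_gt n i j h (by omega), K_bal k A B X n (j-1) (by omega)]

lemma F_F (d : ∀ n, RC k A B X (n+1) →ₗ[k] RC k A B X n)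
    (hd : ∀ n a x, d n (K k A B X (n+1) a x) = F k A B X n a x) (n : ℕ) (a : ℕ → A) (x : X) :
    d n (d (n+1) (K k A B X (n+2) a x)) = 0 := by
  rw [hd, F, map_sum]
  simp only [map_zsmul, G, hd]
  simp only [F]
  apply sum_cancel (n+2) (fun i j => G k A B X n j (fA i a) (fX (n+1) i x a))
  intro i j hji hi
  simp only [G]
  rw [funext (fA_fA i j hji a), fX_fX n i j hji (by omega)]

variable (σ : QM k A B →ₗ[k] A)

def extd {n : ℕ} (c : Fin n → A) (l : ℕ) : A := if h : l < n then c ⟨l, h⟩ else 0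

lemma extd_lt {n : ℕ} (c : Fin n → A) (l : ℕ) (h : l < n) : extd A c l = c ⟨l, h⟩ := by
  simp [extd, h]

lemma extd_update {n : ℕ} [DecidableEq (Fin n)] (c : Fin n → A) (l : Fin n) (u : A) :
    extd A (Function.update c l u) = Function.update (extd A c) l u := by
  funext t
  simp only [extd, Function.update_apply]
  split_ifs <;> first | rfl | skip
  all_goals simp_all [Fin.ext_iff]

lemma σ_update {n : ℕ} [DecidableEq (Fin n)] (α : Fin n → QM k A B) (l : Fin n) (q : QM k A B) :
    (fun t => σ (Function.update α l q t)) = Function.update (fun t => σ (α t)) l (σ q) := by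
  funext t
  simp only [Function.update_apply]
  split_ifs <;> rfl

noncomputable def Mmul (n : ℕ) :
    MultilinearMap k (fun _ : Fin (n+1) => QM k A B) (X →ₗ[k] RC k A B X n) where
  toFun α :=
    { toFun := fun x => F k A B X n (extd A fun t => σ (α t)) x
      map_add' := F_add k A B X n _
      map_smul' := F_smul k A B X n _ }
  map_update_add' := by
    intro inst α l u v
    ext x
    simp only [LinearMap.coe_mk, AddHom.coe_mk, LinearMap.add_apply, σ_update, extd_update,
      map_add]
    exact F_update_add k A B X n l (by omega) _ _ _ _
  map_update_smul' := by
    intro inst α l c u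
    ext x
    simp only [LinearMap.coe_mk, AddHom.coe_mk, LinearMap.smul_apply, σ_update, extd_update,
      map_smul]
    exact F_update_smul k A B X n l (by omega) _ _ _ _

noncomputable def Dpre (n : ℕ) : (X ⊗[k] (⨂[k] (_ : Fin (n+1)), QM k A B)) →ₗ[k] RC k A B X n :=
  TensorProduct.lift (PiTensorProduct.lift (Mmul k A B X σ n)).flip

lemma Dpre_tmul (n : ℕ) (x : X) (α : Fin (n+1) → QM k A B) :
    Dpre k A B X σ n (x ⊗ₜ[k] tprod k α) = F k A B X n (extd A fun t => σ (α t)) x := by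
  simp [Dpre, Mmul]

lemma pi_extd (hσ : ∀ q, πQ k A B (σ q) = q) {n : ℕ} (α : Fin n → QM k A B) (l : ℕ) (h : l < n) :
    πQ k A B (extd A (fun t => σ (α t)) l) = α ⟨l, h⟩ := by
  simp [extd, h, hσ]

lemma Dpre_rel (hσ : ∀ q, πQ k A B (σ q) = q) (n : ℕ) :
    relRel k A B X n ≤ LinearMap.ker (Dpre k A B X σ n) := by
  rw [relRel, Submodule.span_le]
  rintro z ((⟨x, α, b, rfl⟩ | ⟨x, α, b, i, rfl⟩) | ⟨x, α, b, rfl⟩)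
  · simp only [SetLike.mem_coe, LinearMap.mem_ker, map_sub, Dpre_tmul]
    rw [sub_eq_zero]
    have := F_bal k A B X n 0 (by omega) b (extd A fun t => σ (α t)) x
    have h0 : LA 0 (b : A) (extd A fun t => σ (α t)) = extd A fun t => σ (α t) := by
      funext l; simp [LA]
    rw [h0] at this
    simp only [LX, RX, if_true] at this
    rw [this, if_neg (by omega)]
    apply F_congr_pi
    intro l hl
    rw [pi_extd k A B σ hσ _ l (by omega)]
    by_cases h : l = 0
    · subst h
      simp only [RA, if_true, ← Ql_pi]
      rw [pi_extd k A B σ hσ _ 0 (by omega)]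
      simp
    · simp only [RA, h, if_false]
      rw [pi_extd k A B σ hσ _ l (by omega), Function.update_of_ne]
      simpa [Fin.ext_iff] using h
  · simp only [SetLike.mem_coe, LinearMap.mem_ker, map_sub, Dpre_tmul]
    rw [sub_eq_zero]
    have := F_bal k A B X n (i+1) (by omega) b (extd A fun t => σ (α t)) x
    simp only [LX, RX] at this
    rw [if_neg (by omega), if_neg (by omega)] at this
    refine Eq.trans ?_ (this.trans ?_)
    · apply F_congr_pi
      intro l hl
      rw [pi_extd k A B σ hσ _ l (by omega)]
      by_cases h : l = i
      · subst h
        simp only [LA, if_true, ← Qr_pi]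
        rw [pi_extd k A B σ hσ _ _ (by omega)]
        have : (⟨(i:ℕ), by omega⟩ : Fin (n+1)) = i.castSucc := rfl
        rw [this]
        simp
      · simp only [LA, add_left_inj, h, if_false]
        rw [pi_extd k A B σ hσ _ l (by omega), Function.update_of_ne]
        simpa [Fin.ext_iff] using h
    · apply F_congr_pi
      intro l hl
      rw [pi_extd k A B σ hσ _ l (by omega)]
      by_cases h : l = i + 1
      · subst h
        simp only [RA, if_true, ← Ql_pi]
        rw [pi_extd k A B σ hσ _ _ (by omega)]
        have : (⟨(i:ℕ)+1, by omega⟩ : Fin (n+1)) = i.succ := rfl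
        rw [this]
        simp
      · simp only [RA, h, if_false]
        rw [pi_extd k A B σ hσ _ l (by omega), Function.update_of_ne]
        simpa [Fin.ext_iff] using h
  · simp only [SetLike.mem_coe, LinearMap.mem_ker, map_sub, Dpre_tmul]
    rw [sub_eq_zero]
    have := F_bal k A B X n (n+1) (by omega) b (extd A fun t => σ (α t)) x
    simp only [LX, RX, if_true] at this
    rw [if_neg (by omega)] at this
    refine Eq.trans ?_ (this.trans ?_)
    · apply F_congr_pi
      intro l hl
      rw [pi_extd k A B σ hσ _ l (by omega)]
      by_cases h : l = n
      · subst h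
        simp only [LA, if_true, ← Qr_pi]
        rw [pi_extd k A B σ hσ _ _ (by omega)]
        have : (⟨l, by omega⟩ : Fin (l+1)) = Fin.last l := rfl
        rw [this]
        simp
      · simp only [LA, add_left_inj, h, if_false]
        rw [pi_extd k A B σ hσ _ l (by omega), Function.update_of_ne]
        simpa [Fin.ext_iff] using h
    · apply F_congr
      intro l hl
      simp only [RA]
      rw [if_neg (by omega)]

noncomputable def D (hσ : ∀ q, πQ k A B (σ q) = q) (n : ℕ) :
    RC k A B X (n+1) →ₗ[k] RC k A B X n :=
  Submodule.liftQ (relRel k A B X n) (Dpre k A B X σ n) (Dpre_rel k A B X σ hσ n)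

lemma D_mk (hσ : ∀ q, πQ k A B (σ q) = q) (n : ℕ) (x : X) (α : Fin (n+1) → QM k A B) :
    D k A B X σ hσ n (mkRC k A B X n (x ⊗ₜ[k] tprod k α)) =
      F k A B X n (extd A fun t => σ (α t)) x :=
  (Submodule.liftQ_apply _ _ _).trans (Dpre_tmul k A B X σ n x α)

lemma F_zero_eq (x : X) (α : Fin 1 → QM k A B) :
    F k A B X 0 (extd A fun t => σ (α t)) x = mkXB k A B X (relZero k A B X σ x α) := by
  simp [F, Finset.sum_range_succ, G, fX, K, relZero, extd, sub_eq_add_neg]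

lemma F_succ_eq (hσ : ∀ q, πQ k A B (σ q) = q) (n : ℕ) (x : X) (α : Fin (n+2) → QM k A B) :
    F k A B X (n+1) (extd A fun t => σ (α t)) x =
      mkRC k A B X n (relSucc k A B X σ n x α) := by
  rw [F, Finset.sum_range_succ, Finset.sum_range_succ', relSucc, map_add, map_add, map_sum,
    ← Fin.sum_univ_eq_sum_range
      (fun i => (-1 : ℤ)^(i+1) • G k A B X (n+1) (i+1) (extd A fun t => σ (α t)) x) (n+1),
      add_comm (Finset.sum _ _)]
  congr 1
  · congr 1
    · simp only [G, pow_zero, one_smul, fX, if_true, K_succ]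
      congr 3
      · funext i
        have := i.2
        simp only [fA]
        rw [if_neg (by omega), if_neg (by omega)]
        exact pi_extd k A B σ hσ α (i+1) (by omega)
    · refine Finset.sum_congr rfl fun j _ => ?_
      have := j.2
      simp only [G, fX, K_succ, map_zsmul]
      rw [if_neg (by omega), if_neg (by omega)]
      congr 4
      funext i
      have := i.2
      simp only [mergeFun, fA, add_lt_add_iff_right, add_left_inj]
      split_ifs
      · exact pi_extd k A B σ hσ α i (by omega)
      · rw [extd_lt A _ (i : ℕ) (by omega), extd_lt A _ ((i : ℕ)+1) (by omega)]
        rfl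
      · exact pi_extd k A B σ hσ α (i+1) (by omega)
  · have e : ∀ a : ℕ → A, fX (n+1) (n+1+1) x a = a (n+1) • x := by intro a; simp [fX]
    simp only [G, e, K_succ, map_zsmul]
    congr 3
    · simp [extd, Fin.last]
    · congr 1
      funext i
      have := i.2
      simp only [fA]
      rw [if_pos (by omega)]
      exact pi_extd k A B σ hσ α i (by omega)

lemma D_isRelDiff (hσ : ∀ q, πQ k A B (σ q) = q) : IsRelDiff k A B X σ (D k A B X σ hσ) :=
  ⟨fun x α => by rw [D_mk, F_zero_eq], fun n x α => by rw [D_mk, F_succ_eq k A B X σ hσ]⟩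

lemma IsRelDiff.apply (hσ : ∀ q, πQ k A B (σ q) = q)
    {d : ∀ n, RC k A B X (n+1) →ₗ[k] RC k A B X n} (hd : IsRelDiff k A B X σ d)
    (n : ℕ) (a : ℕ → A) (x : X) :
    d n (K k A B X (n+1) a x) = F k A B X n a x := by
  have h1 : d n (K k A B X (n+1) a x) =
      F k A B X n (extd A fun t : Fin (n+1) => σ (πQ k A B (a t))) x := by
    rw [K_succ]
    cases n with
    | zero => rw [hd.1, F_zero_eq]
    | succ n => rw [hd.2, F_succ_eq k A B X σ hσ]
  rw [h1]
  apply F_congr_pi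
  intro l hl
  exact pi_extd k A B σ hσ (fun t : Fin (n+1) => (πQ k A B (a t))) l (by omega)

lemma RC_ext (hσ : ∀ q, πQ k A B (σ q) = q) (n : ℕ) {M : Type} [AddCommGroup M] [Module k M]
    (f g : RC k A B X (n+1) →ₗ[k] M)
    (h : ∀ a x, f (K k A B X (n+1) a x) = g (K k A B X (n+1) a x)) : f = g := by
  have : f.comp (mkRC k A B X n) = g.comp (mkRC k A B X n) := by
    apply TensorProduct.ext
    ext x α
    have := h (extd A fun t => σ (α t)) x
    rw [K_succ] at this
    have e : (fun i : Fin (n+1) => πQ k A B (extd A (fun t => σ (α t)) i)) = α := by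
      funext i
      exact pi_extd k A B σ hσ α i i.2
    rw [e] at this
    exact this
  ext y
  obtain ⟨z, rfl⟩ : ∃ z, mkRC k A B X n z = y := Submodule.mkQ_surjective _ y
  exact LinearMap.congr_fun this z

end main
end JZH

/-- For an extension `B ⊆ A` of `k`-algebras, an `A`-bimodule `X` and a
`k`-linear section `σ` of `π : A → A/B`, the relative Hochschild boundary formula descends to
well-defined `k`-linear maps `b_{A|B} : X ⊗_{Bᵉ} (A/B)^{⊗_B n} → X ⊗_{Bᵉ} (A/B)^{⊗_B (n−1)}`
(with target `X_B` for `n = 1`); these maps satisfy `b_{A|B} ∘ b_{A|B} = 0` and do not depend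
on the choice of the section `σ`. -/
theorem relative_hochschild_differential_well_defined_squares_to_zero_and_independent_of_section
    (k : Type) [Field k] (A : Type) [Ring A] [Algebra k A] (B : Subalgebra k A)
    (X : Type) [AddCommGroup X] [Module k X]
    [Module A X] [Module Aᵐᵒᵖ X] [SMulCommClass A Aᵐᵒᵖ X]
    [IsScalarTower k A X] [IsScalarTower k Aᵐᵒᵖ X]
    (σ : JZH.QM k A B →ₗ[k] A) (hσ : (JZH.πQ k A B).comp σ = LinearMap.id) :
    -- the formula induces well-defined maps:
    (∃ d : ∀ n, JZH.RC k A B X (n+1) →ₗ[k] JZH.RC k A B X n,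
      JZH.IsRelDiff k A B X σ d) ∧
    -- any family of maps given by the formula squares to zero:
    (∀ d : ∀ n, JZH.RC k A B X (n+1) →ₗ[k] JZH.RC k A B X n,
      JZH.IsRelDiff k A B X σ d → ∀ n, (d n).comp (d (n+1)) = 0) ∧
    -- the maps do not depend on the choice of the `k`-linear section:
    (∀ (σ' : JZH.QM k A B →ₗ[k] A), (JZH.πQ k A B).comp σ' = LinearMap.id →
      ∀ (d d' : ∀ n, JZH.RC k A B X (n+1) →ₗ[k] JZH.RC k A B X n),
        JZH.IsRelDiff k A B X σ d → JZH.IsRelDiff k A B X σ' d' → d = d') := by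
  have hσ' : ∀ q, JZH.πQ k A B (σ q) = q := fun q => LinearMap.congr_fun hσ q
  refine ⟨⟨_, JZH.D_isRelDiff k A B X σ hσ'⟩, ?_, ?_⟩
  · intro d hd n
    apply JZH.RC_ext k A B X σ hσ'
    intro a x
    exact JZH.F_F k A B X d (JZH.IsRelDiff.apply k A B X σ hσ' hd) n a x
  · intro τ hτ d d' hd hd'
    have hτ' : ∀ q, JZH.πQ k A B (τ q) = q := fun q => LinearMap.congr_fun hτ q
    funext n
    apply JZH.RC_ext k A B X σ hσ'
    intro a x
    rw [JZH.IsRelDiff.apply k A B X σ hσ' hd, JZH.IsRelDiff.apply k A B X τ hτ' hd']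
end

section
/- For an extension B ⊆ A of k-algebras and an A-bimodule X, there is a fundamental short sequence of chain complexes 0 → Č_*(B,X) →^ι Č_*(A,X) →^κ Č_*(A|B,X) → 0 in which ι is induced by the inclusion B ⊆ A and κ by π, such that: ι and κ are chain maps (in particular κ maps Ker b_A into Ker b_{A|B} in degree 1), ι is injective in every degree, κ∘ι = 0 in every degree, and κ is surjective in every degree n ≥ 2 (though not necessarily in degree 1). -/
open scoped TensorProduct
open MulOpposite PiTensorProduct

namespace JZH

section helpers

variable {k : Type} [Field k]
variable {A : Type} [Ring A] [Algebra k A] {B : Subalgebra k A}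
variable {X : Type} [AddCommGroup X] [Module k X]
  [Module A X] [Module Aᵐᵒᵖ X] [SMulCommClass A Aᵐᵒᵖ X]
  [IsScalarTower k A X] [IsScalarTower k Aᵐᵒᵖ X]

theorem tens_ext {V M : Type} [AddCommGroup V] [Module k V] [AddCommGroup M] [Module k M] {n : ℕ}
    (f g : (X ⊗[k] (⨂[k] (_ : Fin n), V)) →ₗ[k] M)
    (h : ∀ x a, f (x ⊗ₜ[k] tprod k a) = g (x ⊗ₜ[k] tprod k a)) : f = g := by
  apply TensorProduct.ext
  ext x a
  exact h x a

theorem multi_congr {V M : Type} [AddCommGroup V] [Module k V] [AddCommGroup M] [Module k M]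
    {n : ℕ} (f : MultilinearMap k (fun _ : Fin n => V) M) (S : Set V)
    (h : ∀ a i, a i ∈ S → f a = 0) (a c : Fin n → V) (hac : ∀ i, a i - c i ∈ S) :
    f a = f c := by
  have key : ∀ s : Finset (Fin n), f (s.piecewise c a) = f a := by
    intro s
    induction s using Finset.induction_on with
    | empty => simp
    | insert i s hi ih =>
      rw [← ih, Finset.piecewise_insert]
      have e : s.piecewise c a = Function.update (s.piecewise c a) i (a i) := by
        rw [eq_comm, Function.update_eq_self_iff]; simp [hi]
      have h1 := f.map_update_sub (s.piecewise c a) i (a i) (c i)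
      rw [h _ i (by simpa using hac i), ← e] at h1
      exact (sub_eq_zero.1 h1.symm).symm
  have := key Finset.univ
  simpa using this.symm

theorem tens_congr {V M : Type} [AddCommGroup V] [Module k V] [AddCommGroup M] [Module k M] {n : ℕ}
    (f : (X ⊗[k] (⨂[k] (_ : Fin n), V)) →ₗ[k] M) (S : Set V) (x : X)
    (h : ∀ a i, a i ∈ S → f (x ⊗ₜ[k] tprod k a) = 0) (a c : Fin n → V)
    (hac : ∀ i, a i - c i ∈ S) :
    f (x ⊗ₜ[k] tprod k a) = f (x ⊗ₜ[k] tprod k c) :=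
  multi_congr ((f ∘ₗ TensorProduct.mk k X _ x).compMultilinearMap (tprod k)) S h a c hac

theorem πQ_eq_zero {a : A} : πQ k A B a = 0 ↔ a ∈ B := by
  simp [πQ]

theorem tprod_zero {n : ℕ} {V : Type} [AddCommGroup V] [Module k V] (x : X) (α : Fin n → V)
    (l : Fin n) (h : α l = 0) : x ⊗ₜ[k] tprod k α = 0 := by
  have e : tprod k α = 0 := MultilinearMap.map_coord_zero (tprod k) l h
  rw [e, TensorProduct.tmul_zero]

theorem merge_zero {n : ℕ} (x : X) (a : Fin (n+2) → A) (i : Fin (n+2)) (hi : a i ∈ B)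
    (j : Fin (n+1)) (h1 : i ≠ j.castSucc) (h2 : i ≠ j.succ) :
    x ⊗ₜ[k] tprod k (fun l => πQ k A B (mergeFun (fun y z => y * z) a j l)) = 0 := by
  have h1' : (i : ℕ) ≠ j := fun h => h1 (Fin.ext h)
  have h2' : (i : ℕ) ≠ j + 1 := fun h => h2 (Fin.ext h)
  by_cases hlt : (i : ℕ) < j
  · refine tprod_zero _ _ (⟨i, by omega⟩ : Fin (n+1)) ?_
    rw [πQ_eq_zero]
    simpa [mergeFun, hlt] using hi
  · refine tprod_zero _ _ (⟨i - 1, by omega⟩ : Fin (n+1)) ?_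
    rw [πQ_eq_zero]
    have e : (Fin.succ (⟨i - 1, by omega⟩ : Fin (n+1))) = i := by
      ext; simp; omega
    simp only [mergeFun]
    rw [if_neg (by omega), if_neg (by omega), e]
    exact hi

variable (k A B X) in
/-- the class of the Hochschild boundary with entries projected. -/
noncomputable def relA (n : ℕ) (x : X) (a : Fin (n+2) → A) :
    X ⊗[k] (⨂[k] (_ : Fin (n+1)), QM k A B) :=
  (op (a 0) • x) ⊗ₜ[k] (tprod k fun i : Fin (n+1) => πQ k A B (a i.succ))
  + ∑ j : Fin (n+1), ((-1 : ℤ) ^ ((j : ℕ) + 1)) •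
      (x ⊗ₜ[k] (tprod k fun l => πQ k A B (mergeFun (fun y z => y * z) a j l)))
  + ((-1 : ℤ) ^ (n + 2)) •
      ((a (Fin.last (n+1)) • x) ⊗ₜ[k] (tprod k fun i : Fin (n+1) => πQ k A B (a i.castSucc)))

theorem relA_mem {n : ℕ} (x : X) (a : Fin (n+2) → A) (i : Fin (n+2)) (hi : a i ∈ B) :
    relA k A B X n x a ∈ relRel k A B X n := by
  unfold relA
  induction i using Fin.cases with
  | zero =>
    rw [Finset.sum_eq_single (0 : Fin (n+1))]
    · rw [tprod_zero (a (Fin.last (n+1)) • x) _ (0 : Fin (n+1))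
        (by rw [Fin.castSucc_zero]; exact πQ_eq_zero.2 hi)]
      apply Submodule.subset_span
      left; left
      refine ⟨x, fun i => πQ k A B (a i.succ), ⟨a 0, hi⟩, ?_⟩
      simp only [Fin.val_zero, zero_add, pow_one, smul_zero, add_zero, neg_smul, one_smul]
      rw [← sub_eq_add_neg]
      congr 3
      funext l
      by_cases hl : l = 0
      · subst hl
        simp [mergeFun, Ql, πQ]
      · have : (l : ℕ) ≠ 0 := fun h => hl (Fin.ext h)
        simp [mergeFun, hl, this]
    · intro j _ hj
      rw [merge_zero x a 0 hi j, smul_zero]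
      · intro h; apply hj; ext; simpa using (congrArg Fin.val h).symm
      · exact (Fin.succ_ne_zero j).symm
    · simp
  | succ i =>
    rw [tprod_zero (op (a 0) • x) _ i (πQ_eq_zero.2 hi), zero_add]
    induction i using Fin.lastCases with
    | last =>
      rw [Finset.sum_eq_single (Fin.last n)]
      · have hm : x ⊗ₜ[k] (tprod k fun l => πQ k A B (mergeFun (fun y z => y * z) a (Fin.last n) l))
          - (a (Fin.last (n+1)) • x) ⊗ₜ[k]
            (tprod k fun i : Fin (n+1) => πQ k A B (a i.castSucc)) ∈ relRel k A B X n := by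
          apply Submodule.subset_span
          right
          refine ⟨x, fun i => πQ k A B (a i.castSucc), ⟨a (Fin.last (n+1)), hi⟩, ?_⟩
          congr 3
          funext l
          by_cases hl : l = Fin.last n
          · subst hl
            simp [mergeFun, Qr, πQ]
          · have : (l : ℕ) < n := Fin.val_lt_last hl
            simp [mergeFun, hl, this]
        have := (relRel k A B X n).smul_of_tower_mem ((-1 : ℤ) ^ (n+1)) hm
        rw [smul_sub] at this
        convert this using 1
        rw [pow_succ (-1 : ℤ) (n+1), sub_eq_add_neg]
        simp
      · intro j _ hj
        rw [merge_zero x a _ hi j, smul_zero]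
        · intro h
          have := congrArg Fin.val h
          simp at this
          omega
        · intro h; exact hj (Fin.succ_injective _ h).symm
      · simp
    | cast m =>
      rw [tprod_zero (a (Fin.last (n+1)) • x) _ m.succ
        (by rw [Fin.castSucc_succ]; exact πQ_eq_zero.2 hi), smul_zero, add_zero]
      rw [Finset.sum_eq_add m.castSucc m.succ]
      · have hm : x ⊗ₜ[k] (tprod k fun l =>
            πQ k A B (mergeFun (fun y z => y * z) a m.castSucc l))
          - x ⊗ₜ[k] (tprod k fun l =>
            πQ k A B (mergeFun (fun y z => y * z) a m.succ l)) ∈ relRel k A B X n := by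
          apply Submodule.subset_span
          left; right
          refine ⟨x, fun l => πQ k A B (if (l : ℕ) ≤ m then a l.castSucc else a l.succ),
            ⟨a m.castSucc.succ, hi⟩, m, ?_⟩
          congr 3
          · funext l
            by_cases hl : l = m.castSucc
            · subst hl
              simp [mergeFun, Qr, πQ]
            · have : (l : ℕ) ≠ m := fun h => hl (Fin.ext h)
              rw [Function.update_of_ne hl]
              simp only [mergeFun, Fin.val_castSucc]
              congr 1
              split_ifs <;> first | rfl | omega
          · funext l
            by_cases hl : l = m.succ
            · subst hl
              simp [mergeFun, Ql, πQ]
            · have : (l : ℕ) ≠ m + 1 := fun h => hl (Fin.ext h)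
              rw [Function.update_of_ne hl]
              simp only [mergeFun, Fin.val_succ]
              congr 1
              split_ifs <;> first | rfl | omega
        have := (relRel k A B X n).smul_of_tower_mem ((-1 : ℤ) ^ ((m:ℕ)+1)) hm
        rw [smul_sub] at this
        convert this using 1
        rw [Fin.val_succ, Fin.val_castSucc, pow_succ (-1 : ℤ) ((m:ℕ)+1), sub_eq_add_neg]
        simp
      · intro h
        have := congrArg Fin.val h
        simp at this
      · intro j _ hj
        rw [merge_zero x a _ hi j, smul_zero]
        · intro h
          apply hj.2
          ext
          have := congrArg Fin.val h
          simpa using this.symm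
        · intro h
          apply hj.1
          ext
          have := congrArg Fin.val h
          simp at this
          simpa using this.symm
      · simp
      · simp

theorem κmap_tmul (n : ℕ) (x : X) (a : Fin (n+1) → A) :
    κmap k A B X (n+1) (x ⊗ₜ[k] tprod k a) =
      mkRC k A B X n (x ⊗ₜ[k] tprod k (fun i => πQ k A B (a i))) := by
  change mkRC k A B X n (TensorProduct.map LinearMap.id
    (PiTensorProduct.map fun _ => πQ k A B) (x ⊗ₜ[k] tprod k a)) = _
  rw [TensorProduct.map_tmul, PiTensorProduct.map_tprod]
  rfl

theorem ιmap_tmul (n : ℕ) (x : X) (a : Fin (n+1) → B) :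
    ιmap k A B X (n+1) (x ⊗ₜ[k] tprod k a) =
      (x ⊗ₜ[k] tprod k (fun i => (a i : A)) : X ⊗[k] (⨂[k] (_ : Fin (n+1)), A)) := by
  change TensorProduct.map LinearMap.id
    (PiTensorProduct.map fun _ => B.val.toLinearMap) (x ⊗ₜ[k] tprod k a) = _
  rw [TensorProduct.map_tmul, PiTensorProduct.map_tprod]
  rfl

theorem κmap_hoch (n : ℕ) (x : X) (a : Fin (n+2) → A) :
    κmap k A B X (n+1) (hochSucc k A X n x a) = mkRC k A B X n (relA k A B X n x a) := by
  change mkRC k A B X n (TensorProduct.map LinearMap.id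
    (PiTensorProduct.map fun _ => πQ k A B) (_ + ∑ j, _ + _)) = _
  congr 1
  unfold relA
  simp only [map_add, map_sum, map_zsmul, TensorProduct.map_tmul, PiTensorProduct.map_tprod,
    LinearMap.id_apply]

theorem ιmap_hoch (n : ℕ) (x : X) (a : Fin (n+2) → B) :
    ιmap k A B X (n+1) (hochBSucc k A B X n x a) = hochSucc k A X n x (fun i => (a i : A)) := by
  change TensorProduct.map LinearMap.id
    (PiTensorProduct.map fun _ => B.val.toLinearMap) (_ + ∑ j, _ + _) = _
  unfold hochSucc
  simp only [map_add, map_sum, map_zsmul, TensorProduct.map_tmul, PiTensorProduct.map_tprod,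
    LinearMap.id_apply]
  refine congrArg₂ _ (congrArg₂ _ rfl (Finset.sum_congr rfl fun j _ => ?_)) rfl
  congr 3
  funext l
  simp only [mergeFun]
  split_ifs <;> rfl

theorem relSucc_eq (σ : QM k A B →ₗ[k] A) (hσ : (πQ k A B).comp σ = LinearMap.id)
    (n : ℕ) (x : X) (α : Fin (n+2) → QM k A B) :
    relSucc k A B X σ n x α = relA k A B X n x (fun i => σ (α i)) := by
  have h : ∀ q, πQ k A B (σ q) = q := fun q => LinearMap.congr_fun hσ q
  unfold relSucc relA
  simp only [h]
  refine congrArg₂ _ (congrArg₂ _ rfl (Finset.sum_congr rfl fun j _ => ?_)) rfl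
  congr 3
  funext l
  simp only [mergeFun]
  split_ifs <;> simp [h]

end helpers

end JZH

/-- The fundamental short sequence
`0 → Č_*(B,X) →^ι Č_*(A,X) →^κ Č_*(A|B,X) → 0` of truncated complexes: `ι` and `κ` are chain
maps (in particular `κ` maps `Ker b_A` into `Ker b_{A|B}` in degree `1`), `ι` is injective in
every degree, `κ ∘ ι = 0` in every degree (of the truncated complexes, i.e. in degrees `≥ 1`),
and `κ` is surjective in every degree `n ≥ 2`. -/
theorem fundamental_short_nearly_exact_sequence
    (k : Type) [Field k] (A : Type) [Ring A] [Algebra k A] (B : Subalgebra k A)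
    (X : Type) [AddCommGroup X] [Module k X]
    [Module A X] [Module Aᵐᵒᵖ X] [SMulCommClass A Aᵐᵒᵖ X]
    [IsScalarTower k A X] [IsScalarTower k Aᵐᵒᵖ X]
    (σ : JZH.QM k A B →ₗ[k] A) (hσ : (JZH.πQ k A B).comp σ = LinearMap.id)
    (bB : ∀ n, JZH.CHB k A B X (n+1) →ₗ[k] JZH.CHB k A B X n)
    (hbB : JZH.IsHochschildDiffB k A B X bB)
    (bA : ∀ n, JZH.CH k A X (n+1) →ₗ[k] JZH.CH k A X n)
    (hbA : JZH.IsHochschildDiff k A X bA)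
    (bR : ∀ n, JZH.RC k A B X (n+1) →ₗ[k] JZH.RC k A B X n)
    (hbR : JZH.IsRelDiff k A B X σ bR) :
    -- `ι` is a chain map:
    (∀ n, (bA n).comp (JZH.ιmap k A B X (n+1)) = (JZH.ιmap k A B X n).comp (bB n)) ∧
    -- `κ` is a chain map:
    (∀ n, (bR n).comp (JZH.κmap k A B X (n+1)) = (JZH.κmap k A B X n).comp (bA n)) ∧
    -- in degree `1`, `κ` maps `Ker b_A` into `Ker b_{A|B}`
    -- (so it restricts to the degree-1 terms of the truncated complexes):
    (∀ z ∈ LinearMap.ker (bA 0), JZH.κmap k A B X 1 z ∈ LinearMap.ker (bR 0)) ∧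
    -- `ι` is injective in every degree:
    (∀ n, Function.Injective (JZH.ιmap k A B X n)) ∧
    -- `κ ∘ ι = 0` in every degree of the truncated complexes:
    (∀ n, (JZH.κmap k A B X (n+1)).comp (JZH.ιmap k A B X (n+1)) = 0) ∧
    -- `κ` is surjective in every degree `n ≥ 2`:
    (∀ n, Function.Surjective (JZH.κmap k A B X (n+2))) := by
  have hs : ∀ q, JZH.πQ k A B (σ q) = q := fun q => LinearMap.congr_fun hσ q
  have hmem : ∀ a : A, a - σ (JZH.πQ k A B a) ∈ B := fun a => by
    rw [← JZH.πQ_eq_zero (k := k), map_sub, hs, sub_self]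
  have hκ : ∀ n, (bR n).comp (JZH.κmap k A B X (n+1)) = (JZH.κmap k A B X n).comp (bA n) := by
    intro n
    refine JZH.tens_ext (k := k) (X := X) (V := A) _ _ fun x a => ?_
    refine Eq.trans (congrArg (bR n) (JZH.κmap_tmul n x a)) ?_
    refine Eq.trans ?_ (JZH.tens_congr (k := k) (X := X) (V := A)
      ((JZH.κmap k A B X n).comp (bA n)) (B : Set A) x ?_ a
      (fun i => σ (JZH.πQ k A B (a i))) (fun i => hmem (a i))).symm
    · cases n with
      | zero =>
        refine (hbR.1 x _).trans ?_
        exact (congrArg (JZH.κmap k A B X 0) (hbA.1 x (fun i => σ (JZH.πQ k A B (a i))))).symm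
      | succ n =>
        refine (hbR.2 n x _).trans ?_
        refine Eq.trans ?_ (congrArg (JZH.κmap k A B X (n+1)) (hbA.2 n x _)).symm
        rw [JZH.κmap_hoch, JZH.relSucc_eq σ hσ]
    · intro c i hc
      cases n with
      | zero =>
        refine (congrArg (JZH.κmap k A B X 0) (hbA.1 x c)).trans ?_
        refine (Submodule.Quotient.mk_eq_zero _).2 ?_
        have hi : i = 0 := Fin.ext (by have := i.isLt; simp at this ⊢)
        subst hi
        have : (c 0 • x - op (c 0) • x) ∈ JZH.commRel k A B X :=
          Submodule.subset_span ⟨⟨c 0, hc⟩, x, rfl⟩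
        have h2 := (JZH.commRel k A B X).neg_mem this
        rw [neg_sub] at h2
        exact h2
      | succ n =>
        refine (congrArg (JZH.κmap k A B X (n+1)) (hbA.2 n x c)).trans ?_
        rw [JZH.κmap_hoch]
        exact (Submodule.Quotient.mk_eq_zero _).2 (JZH.relA_mem x c i hc)
  refine ⟨?_, hκ, ?_, ?_, ?_, ?_⟩
  · intro n
    refine JZH.tens_ext (k := k) (X := X) (V := B) _ _ fun x a => ?_
    refine Eq.trans (congrArg (bA n) (JZH.ιmap_tmul n x a)) ?_
    cases n with
    | zero =>
      refine (hbA.1 x _).trans ?_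
      exact (congrArg (JZH.ιmap k A B X 0) (hbB.1 x _)).symm
    | succ n =>
      refine (hbA.2 n x _).trans ?_
      refine Eq.trans ?_ (congrArg (JZH.ιmap k A B X (n+1)) (hbB.2 n x _)).symm
      rw [JZH.ιmap_hoch]
  · intro z hz
    rw [LinearMap.mem_ker] at hz ⊢
    have := LinearMap.congr_fun (hκ 0) z
    rw [LinearMap.comp_apply, LinearMap.comp_apply, hz, map_zero] at this
    exact this
  · intro n
    cases n with
    | zero => exact fun _ _ h => h
    | succ n =>
      obtain ⟨g, hg⟩ := B.val.toLinearMap.exists_leftInverse_of_injective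
        (LinearMap.ker_eq_bot.2 Subtype.val_injective)
      have : (TensorProduct.map (LinearMap.id : X →ₗ[k] X)
          (PiTensorProduct.map fun _ : Fin (n+1) => g)).comp
          (TensorProduct.map (LinearMap.id : X →ₗ[k] X)
            (PiTensorProduct.map fun _ : Fin (n+1) => B.val.toLinearMap)) = LinearMap.id := by
        rw [← TensorProduct.map_comp, ← PiTensorProduct.map_comp, hg]
        simp
      exact Function.LeftInverse.injective (LinearMap.congr_fun this)
  · intro n
    refine JZH.tens_ext (k := k) (X := X) (V := B) _ _ fun x a => ?_
    refine Eq.trans (congrArg (JZH.κmap k A B X (n+1)) (JZH.ιmap_tmul n x a)) ?_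
    rw [JZH.κmap_tmul, JZH.tprod_zero x _ 0 (JZH.πQ_eq_zero.2 (a 0).2), map_zero]
    rfl
  · intro n
    have : (TensorProduct.map (LinearMap.id : X →ₗ[k] X)
        (PiTensorProduct.map fun _ : Fin (n+2) => JZH.πQ k A B)).comp
        (TensorProduct.map (LinearMap.id : X →ₗ[k] X)
          (PiTensorProduct.map fun _ : Fin (n+2) => σ)) = LinearMap.id := by
      rw [← TensorProduct.map_comp, ← PiTensorProduct.map_comp, hσ]
      simp
    exact (Submodule.mkQ_surjective (JZH.relRel k A B X (n+1))).comp
      (Function.RightInverse.surjective (LinearMap.congr_fun this))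
end

section
/- Let B ⊆ A be an extension of k-algebras, X an A-bimodule, σ a k-linear section of π : A → A/B, and S = σ(A/B), so that A = B ⊕ S as k-vector spaces. Then for every n ≥ 2: (i) the kernel of κ : X⊗A^{⊗n} → X⊗_{B^e}(A/B)^{⊗_B n} equals L_{n,0} ⊕ (⊕_{p+q=n, p≥0, q>0} X⊗[S_pB_q]); (ii) the image of the inclusion ι : X⊗B^{⊗n} → X⊗A^{⊗n} equals X⊗[S_0B_n] = X⊗B^{⊗n}; and (iii) consequently Ker κ / Im ι ≅ L_{n,0} ⊕ (⊕_{p+q=n, p>0, q>0} X⊗[S_pB_q]). -/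
open scoped TensorProduct
open MulOpposite PiTensorProduct

namespace JZH

variable (k : Type) [Field k]
variable (A : Type) [Ring A] [Algebra k A] (B : Subalgebra k A)
variable (X : Type) [AddCommGroup X] [Module k X]
  [Module A X] [Module Aᵐᵒᵖ X] [SMulCommClass A Aᵐᵒᵖ X]
  [IsScalarTower k A X] [IsScalarTower k Aᵐᵒᵖ X]

/-- The subspace `V₁ ⊗ ⋯ ⊗ Vₙ` of `A^{⊗n}` associated to a family of subspaces `W i ⊆ A`. -/
noncomputable def sliceSub (n : ℕ) (W : Fin n → Submodule k A) :
    Submodule k (⨂[k] (_ : Fin n), A) :=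
  LinearMap.range (PiTensorProduct.map fun i => (W i).subtype)

/-- The family of subspaces of `A` determined by `ε : Fin n → Bool`: slot `i` is
`S = σ(A/B)` if `ε i = true` and `B` if `ε i = false`. -/
noncomputable def slotSub (σ : QM k A B →ₗ[k] A) {n : ℕ} (ε : Fin n → Bool) :
    Fin n → Submodule k A :=
  fun i => if ε i then LinearMap.range σ else Subalgebra.toSubmodule B

/-- The subspace `X ⊗ U` of `X ⊗ T` associated to a subspace `U ⊆ T`. -/
noncomputable def xTensorSub {T : Type} [AddCommGroup T] [Module k T]
    (U : Submodule k T) : Submodule k (X ⊗[k] T) :=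
  LinearMap.range (LinearMap.lTensor X U.subtype)

/-- `L_{n,0}`: the kernel of the restriction of `κ` to `X ⊗ S^{⊗n}`, i.e.
`(X ⊗ S^{⊗n}) ∩ Ker κ`. -/
noncomputable def Ln0 (σ : QM k A B →ₗ[k] A) (m : ℕ) :
    Submodule k (CH k A X (m+1)) :=
  (xTensorSub k X (sliceSub k A (m+1) (slotSub k A B σ (fun _ => true)))) ⊓
    LinearMap.ker (κmap k A B X (m+1))

end JZH

namespace JZHaux

section abs
variable {k M R I : Type} [Field k] [AddCommGroup M] [Module k M] [AddCommGroup R] [Module k R]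
  [Fintype I] [DecidableEq I]

theorem abs_kt (κ : M →ₗ[k] R) (P : I → M →ₗ[k] M) (t : I)
    (hid : ∀ x, ∑ e, P e x = x) (hk : ∀ e, e ≠ t → ∀ x, κ (P e x) = 0) (x : M) :
    κ (P t x) = κ x := by
  conv_rhs => rw [← hid x, map_sum]
  exact (Finset.sum_eq_single t (fun e _ he => hk e he x) (by simp)).symm

theorem abs_i (κ : M →ₗ[k] R) (P : I → M →ₗ[k] M) (N : I → Submodule k M) (t : I)
    (hN : ∀ e x, x ∈ N e ↔ P e x = x) (hP : ∀ e x, P e x ∈ N e)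
    (hid : ∀ x, ∑ e, P e x = x)
    (hk : ∀ e, e ≠ t → ∀ x, κ (P e x) = 0) (Q : I → Prop) (hQ : ∀ e, Q e ↔ e ≠ t) :
    LinearMap.ker κ = (N t ⊓ LinearMap.ker κ) ⊔ ⨆ (e : I) (_ : Q e), N e := by
  apply le_antisymm
  · intro x hx
    rw [← hid x]
    refine Submodule.sum_mem _ fun e _ => ?_
    by_cases he : e = t
    · subst he
      refine Submodule.mem_sup_left ⟨hP _ _, ?_⟩
      have hx' : κ x = 0 := hx
      change κ (P e x) = 0
      rw [abs_kt κ P e hid hk, hx']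
    · exact Submodule.mem_sup_right
        (Submodule.mem_iSup_of_mem e (Submodule.mem_iSup_of_mem ((hQ e).2 he) (hP _ _)))
  · refine sup_le inf_le_right (iSup_le fun e => iSup_le fun he => ?_)
    intro x hx
    have := hk e ((hQ e).1 he) x
    rw [(hN e x).1 hx] at this
    exact this

theorem abs_iii (κ : M →ₗ[k] R) (P : I → M →ₗ[k] M) (N : I → Submodule k M) (t f : I)
    (htf : t ≠ f)
    (hN : ∀ e x, x ∈ N e ↔ P e x = x) (hP : ∀ e x, P e x ∈ N e)
    (hid : ∀ x, ∑ e, P e x = x)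
    (horth : ∀ e d, e ≠ d → ∀ x, P e (P d x) = 0)
    (hk : ∀ e, e ≠ t → ∀ x, κ (P e x) = 0) (Q : I → Prop) (hQ : ∀ e, Q e ↔ e ≠ t ∧ e ≠ f) :
    Nonempty ((LinearMap.ker κ ⧸ (N f).comap (LinearMap.ker κ).subtype) ≃ₗ[k]
      (N t ⊓ LinearMap.ker κ : Submodule k M) × DirectSum {e : I // Q e} (fun e => N e.1)) := by
  classical
  have ho : ∀ e d, e ≠ d → ∀ x ∈ N d, P e x = 0 := fun e d h x hx => by
    rw [← (hN d x).1 hx]; exact horth e d h x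
  have hkt := abs_kt κ P t hid hk
  let F1 : LinearMap.ker κ →ₗ[k] (N t ⊓ LinearMap.ker κ : Submodule k M) :=
    LinearMap.codRestrict _ ((P t).comp (LinearMap.ker κ).subtype)
      (fun x => ⟨hP _ _, by
        have hx : κ x.1 = 0 := x.2
        change κ (P t x.1) = 0
        rw [hkt, hx]⟩)
  let F2 : LinearMap.ker κ →ₗ[k] ((e : {e : I // Q e}) → N e.1) :=
    LinearMap.pi fun e => LinearMap.codRestrict _ ((P e.1).comp (LinearMap.ker κ).subtype)
      (fun x => hP _ _)
  have hs : Function.Surjective (F1.prod F2) := by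
    rintro ⟨l, g⟩
    have hl1 : l.1 ∈ N t := l.2.1
    have hl2 : κ l.1 = 0 := l.2.2
    have hg : ∀ e, κ (g e).1 = 0 := fun e => by
      have := hk e.1 ((hQ _).1 e.2).1 (g e).1
      rwa [(hN _ _).1 (g e).2] at this
    refine ⟨⟨l.1 + ∑ e, (g e).1, ?_⟩, ?_⟩
    · simp [hl2, hg]
    · refine Prod.ext ?_ ?_
      · apply Subtype.ext
        change P t (l.1 + ∑ e, (g e).1) = l.1
        rw [map_add, map_sum, (hN _ _).1 hl1, Finset.sum_eq_zero, add_zero]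
        intro e _
        exact ho _ _ (Ne.symm ((hQ _).1 e.2).1) _ (g e).2
      · funext e
        apply Subtype.ext
        change P e.1 (l.1 + ∑ e, (g e).1) = (g e).1
        rw [map_add, map_sum, ho _ _ ((hQ _).1 e.2).1 _ hl1, zero_add,
          Finset.sum_eq_single e, (hN _ _).1 (g e).2]
        · intro d _ hd
          exact ho _ _ (fun h => hd (Subtype.ext h.symm)) _ (g d).2
        · simp
  have hker : LinearMap.ker (F1.prod F2) = (N f).comap (LinearMap.ker κ).subtype := by
    ext x
    rw [LinearMap.mem_ker, Submodule.mem_comap, hN]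
    constructor
    · intro h
      have h1 : P t x.1 = 0 := congrArg (fun z => z.1.1) h
      have h2 : ∀ e : {e : I // Q e}, P e.1 x.1 = 0 := fun e =>
        congrArg (fun z => (z.2 e).1) h
      have := hid x.1
      rw [Finset.sum_eq_single f] at this
      · exact this
      · intro e _ he
        by_cases het : e = t
        · rw [het]; exact h1
        · exact h2 ⟨e, (hQ e).2 ⟨het, he⟩⟩
      · simp
    · intro h
      have hx : x.1 ∈ N f := (hN _ _).2 h
      refine Prod.ext ?_ ?_
      · exact Subtype.ext (ho t f htf _ hx)
      · funext e
        exact Subtype.ext (ho e.1 f ((hQ _).1 e.2).2 _ hx)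
  exact ⟨(Submodule.quotEquivOfEq _ _ hker.symm).trans
    (((F1.prod F2).quotKerEquivOfSurjective hs).trans
      ((LinearEquiv.refl k _).prodCongr
        (DirectSum.linearEquivFunOnFintype k {e : I // Q e} (fun e => N e.1)).symm))⟩

end abs

section conc
variable {k A X : Type} [Field k] [AddCommGroup A] [Module k A] [AddCommGroup X] [Module k X]

theorem range_lT {T U : Type} [AddCommGroup T] [Module k T] [AddCommGroup U] [Module k U]
    (f : T →ₗ[k] U) : LinearMap.range (LinearMap.lTensor X (LinearMap.range f).subtype) =
      LinearMap.range (LinearMap.lTensor X f) := by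
  have : f = (LinearMap.range f).subtype.comp f.rangeRestrict := by ext; rfl
  conv_rhs => rw [this, LinearMap.lTensor_comp, LinearMap.range_comp,
    LinearMap.range_eq_top.2 (LinearMap.lTensor_surjective X f.surjective_rangeRestrict),
    Submodule.map_top]

theorem mem_slice {n : ℕ} (q : Fin n → A →ₗ[k] A) (W : Fin n → Submodule k A)
    (h1 : ∀ i a, q i a ∈ W i) (h2 : ∀ i, ∀ a ∈ W i, q i a = a) :
    LinearMap.range (LinearMap.lTensor X
      (LinearMap.range (PiTensorProduct.map fun i => (W i).subtype)).subtype) =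
    LinearMap.range (LinearMap.lTensor X (PiTensorProduct.map q)) ∧
    ∀ x, LinearMap.lTensor X (PiTensorProduct.map q)
      (LinearMap.lTensor X (PiTensorProduct.map q) x) =
        LinearMap.lTensor X (PiTensorProduct.map q) x := by
  have e1 : LinearMap.range (LinearMap.lTensor X
      (LinearMap.range (PiTensorProduct.map fun i => (W i).subtype)).subtype) =
      LinearMap.range (LinearMap.lTensor X (PiTensorProduct.map fun i => (W i).subtype)) := range_lT _
  have e2 : PiTensorProduct.map q = (PiTensorProduct.map fun i => (W i).subtype).comp
      (PiTensorProduct.map fun i => (q i).codRestrict (W i) (h1 i)) := by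
    rw [← PiTensorProduct.map_comp]; rfl
  have e3 : (PiTensorProduct.map fun i => (W i).subtype) =
      (PiTensorProduct.map q).comp (PiTensorProduct.map fun i => (W i).subtype) := by
    rw [← PiTensorProduct.map_comp]
    congr 1
    funext i
    ext a
    exact (h2 i a.1 a.2).symm
  have e4 : (PiTensorProduct.map q).comp (PiTensorProduct.map q) = PiTensorProduct.map q := by
    rw [← PiTensorProduct.map_comp]
    congr 1
    funext i
    ext a
    exact h2 i _ (h1 i a)
  refine ⟨?_, fun x => ?_⟩
  · rw [e1]
    apply le_antisymm
    · rw [e3, LinearMap.lTensor_comp]; exact LinearMap.range_comp_le_range _ _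
    · rw [e2, LinearMap.lTensor_comp]; exact LinearMap.range_comp_le_range _ _
  · rw [← LinearMap.comp_apply, ← LinearMap.lTensor_comp, e4]

theorem range_retract {C : Type} [AddCommGroup C] [Module k C] {n : ℕ} (q : A →ₗ[k] A)
    (f : C →ₗ[k] A) (g : A →ₗ[k] C) (h1 : q.comp f = f) (h2 : f.comp g = q) :
    LinearMap.range (TensorProduct.map (LinearMap.id : X →ₗ[k] X)
      (PiTensorProduct.map fun _ : Fin n => f)) =
    LinearMap.range (LinearMap.lTensor X (PiTensorProduct.map fun _ : Fin n => q)) := by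
  change LinearMap.range (LinearMap.lTensor X (PiTensorProduct.map fun _ : Fin n => f)) = _
  apply le_antisymm
  · conv_lhs => rw [← h1, PiTensorProduct.map_comp, LinearMap.lTensor_comp]
    exact LinearMap.range_comp_le_range _ _
  · conv_lhs => rw [← h2, PiTensorProduct.map_comp, LinearMap.lTensor_comp]
    exact LinearMap.range_comp_le_range _ _

theorem map_zero_of {C : Type} [AddCommGroup C] [Module k C] {n : ℕ} (q : Fin n → A →ₗ[k] C)
    (i : Fin n) (h : q i = 0) : PiTensorProduct.map q = 0 := by
  ext a
  simp only [LinearMap.compMultilinearMap_apply, PiTensorProduct.map_tprod, LinearMap.zero_apply]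
  exact (PiTensorProduct.tprod k).map_coord_zero i (by simp [h])

theorem sum_maps {n : ℕ} (p : Bool → A →ₗ[k] A) (hp : p true + p false = LinearMap.id) :
    ∑ e : Fin n → Bool, PiTensorProduct.map (fun i => p (e i)) = LinearMap.id := by
  have h := (PiTensorProduct.mapMultilinear k (fun _ : Fin n => A) (fun _ : Fin n => A)).map_sum
    (fun (_ : Fin n) (b : Bool) => p b)
  simp only [Fintype.sum_bool, hp, PiTensorProduct.mapMultilinear_apply] at h
  rw [← h]
  exact PiTensorProduct.map_id

end conc
end JZHaux



/-- Let `B ⊆ A` be an extension of `k`-algebras, `X` an `A`-bimodule,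
`σ` a `k`-linear section of `π : A → A/B` and `S = σ(A/B)`, so `A = B ⊕ S`.  For every
`n = m+2 ≥ 2`: (i) `Ker (κ : X⊗A^{⊗n} → X⊗_{Bᵉ}(A/B)^{⊗_B n})` is the sum of `L_{n,0}` and
the subspaces `X ⊗ [S_pB_q]` with `q > 0`; (ii) the image of `ι : X⊗B^{⊗n} → X⊗A^{⊗n}` is
`X ⊗ [S_0B_n]`; (iii) consequently `Ker κ / Im ι ≅ L_{n,0} ⊕ (⊕_{p,q>0} X ⊗ [S_pB_q])`. -/
theorem kernel_of_kappa_decomposition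
    (k : Type) [Field k] (A : Type) [Ring A] [Algebra k A] (B : Subalgebra k A)
    (X : Type) [AddCommGroup X] [Module k X]
    [Module A X] [Module Aᵐᵒᵖ X] [SMulCommClass A Aᵐᵒᵖ X]
    [IsScalarTower k A X] [IsScalarTower k Aᵐᵒᵖ X]
    (σ : JZH.QM k A B →ₗ[k] A) (hσ : (JZH.πQ k A B).comp σ = LinearMap.id)
    (m : ℕ) :
    -- (i) the kernel of `κ` in degree `n = m+2`:
    (LinearMap.ker (JZH.κmap k A B X (m+2)) =
      JZH.Ln0 k A B X σ (m+1) ⊔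
        ⨆ (ε : Fin (m+2) → Bool) (_ : ∃ i, ε i = false),
          JZH.xTensorSub k X (JZH.sliceSub k A (m+2) (JZH.slotSub k A B σ ε))) ∧
    -- (ii) the image of `ι` in degree `n = m+2`:
    (LinearMap.range (JZH.ιmap k A B X (m+2)) =
      JZH.xTensorSub k X
        (JZH.sliceSub k A (m+2) (JZH.slotSub k A B σ (fun _ => false)))) ∧
    -- (iii) the quotient `Ker κ / Im ι` decomposes as a direct sum:
    Nonempty
      ((LinearMap.ker (JZH.κmap k A B X (m+2)) ⧸
          (LinearMap.range (JZH.ιmap k A B X (m+2))).comap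
            (LinearMap.ker (JZH.κmap k A B X (m+2))).subtype) ≃ₗ[k]
        (JZH.Ln0 k A B X σ (m+1)) ×
          (DirectSum {ε : Fin (m+2) → Bool // (∃ i, ε i = true) ∧ (∃ i, ε i = false)}
            (fun ε => JZH.xTensorSub k X
              (JZH.sliceSub k A (m+2) (JZH.slotSub k A B σ ε.1))))) := by
  classical
  have hσ' : ∀ q, JZH.πQ k A B (σ q) = q := fun q => LinearMap.congr_fun hσ q
  have hπB : ∀ a ∈ Subalgebra.toSubmodule B, JZH.πQ k A B a = 0 := fun a ha =>
    (Submodule.Quotient.mk_eq_zero _).2 ha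
  let pt : A →ₗ[k] A := σ.comp (JZH.πQ k A B)
  let p : Bool → A →ₗ[k] A := fun b => if b then pt else LinearMap.id - pt
  have hp : p true + p false = LinearMap.id := by simp [p]
  have hpt : ∀ a, p true a = σ (JZH.πQ k A B a) := fun a => rfl
  have hpf : ∀ a, p false a = a - σ (JZH.πQ k A B a) := fun a => rfl
  have hπf : (JZH.πQ k A B).comp (p false) = 0 := by
    ext a
    simp [hpf, hσ']
  let P : (Fin (m+2) → Bool) → (X ⊗[k] (⨂[k] (_ : Fin (m+2)), A)) →ₗ[k]
      (X ⊗[k] (⨂[k] (_ : Fin (m+2)), A)) :=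
    fun e => LinearMap.lTensor X (PiTensorProduct.map fun i => p (e i))
  let N : (Fin (m+2) → Bool) → Submodule k (X ⊗[k] (⨂[k] (_ : Fin (m+2)), A)) :=
    fun e => JZH.xTensorSub k X (JZH.sliceSub k A (m+2) (JZH.slotSub k A B σ e))
  let κ : (X ⊗[k] (⨂[k] (_ : Fin (m+2)), A)) →ₗ[k]
      ((X ⊗[k] (⨂[k] (_ : Fin (m+2)), JZH.QM k A B)) ⧸ JZH.relRel k A B X (m+1)) :=
    (JZH.relRel k A B X (m+1)).mkQ.comp
      (LinearMap.lTensor X (PiTensorProduct.map fun _ => JZH.πQ k A B))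
  have hsl : ∀ e, N e = LinearMap.range (P e) ∧ ∀ x, P e (P e x) = P e x := by
    intro e
    refine JZHaux.mem_slice (X := X) (fun i => p (e i)) (JZH.slotSub k A B σ e) ?_ ?_
    · intro i a
      cases he : e i
      · simp only [JZH.slotSub, he, hpf, Bool.false_eq_true, if_false]
        apply (Submodule.Quotient.mk_eq_zero _).1
        exact LinearMap.congr_fun hπf a
      · simp only [JZH.slotSub, he, hpt, if_true]
        exact LinearMap.mem_range_self _ _
    · intro i a ha
      cases he : e i
      · simp only [JZH.slotSub, he, Bool.false_eq_true, if_false] at ha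
        rw [hpf, hπB a ha, map_zero, sub_zero]
      · simp only [JZH.slotSub, he, if_true] at ha
        obtain ⟨q, rfl⟩ := ha
        rw [hpt, hσ']
  have hP : ∀ e x, P e x ∈ N e := fun e x => by
    rw [(hsl e).1]; exact LinearMap.mem_range_self _ _
  have hN : ∀ e x, x ∈ N e ↔ P e x = x := by
    intro e x
    constructor
    · intro h
      rw [(hsl e).1] at h
      obtain ⟨y, rfl⟩ := h
      exact (hsl e).2 y
    · intro h
      rw [← h]; exact hP e x
  have hid : ∀ x, ∑ e, P e x = x := by
    intro x
    have h := congrArg (LinearMap.lTensor X) (JZHaux.sum_maps (n := m+2) p hp)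
    have h2 := LinearMap.congr_fun h x
    rw [← LinearMap.coe_lTensorHom, map_sum] at h2
    simpa using h2
  have horth : ∀ e d, e ≠ d → ∀ x, P e (P d x) = 0 := by
    intro e d hed x
    obtain ⟨i, hi⟩ := Function.ne_iff.1 hed
    change LinearMap.lTensor X _ (LinearMap.lTensor X _ x) = 0
    rw [← LinearMap.comp_apply, ← LinearMap.lTensor_comp, ← PiTensorProduct.map_comp,
      JZHaux.map_zero_of _ i, LinearMap.lTensor_zero, LinearMap.zero_apply]
    ext a
    cases he : e i <;> cases hd : d i
    · simp [he, hd] at hi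
    · simp [hpt, hpf, hσ']
    · simp [hpt, hpf, hσ']
    · simp [he, hd] at hi
  have hk : ∀ e, e ≠ (fun _ => true) → ∀ x, κ (P e x) = 0 := by
    intro e he x
    obtain ⟨i, hi⟩ := Function.ne_iff.1 he
    have hi' : e i = false := by simpa using hi
    change (JZH.relRel k A B X (m+1)).mkQ
      (LinearMap.lTensor X _ (LinearMap.lTensor X _ x)) = 0
    rw [← LinearMap.comp_apply (LinearMap.lTensor X _), ← LinearMap.lTensor_comp,
      ← PiTensorProduct.map_comp,
      JZHaux.map_zero_of _ i, LinearMap.lTensor_zero, LinearMap.zero_apply, map_zero]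
    rw [hi']; exact hπf
  have hf : ∀ e : Fin (m+2) → Bool, (∃ i, e i = false) ↔ e ≠ (fun _ => true) := by
    intro e; rw [Function.ne_iff]; simp
  have ht : ∀ e : Fin (m+2) → Bool, (∃ i, e i = true) ↔ e ≠ (fun _ => false) := by
    intro e; rw [Function.ne_iff]; simp
  have hmem : ∀ a, p false a ∈ Subalgebra.toSubmodule B := fun a =>
    (Submodule.Quotient.mk_eq_zero _).1 (LinearMap.congr_fun hπf a)
  let g : A →ₗ[k] B :=
    { toFun := fun a => ⟨p false a, hmem a⟩
      map_add' := fun a b => Subtype.ext (map_add _ a b)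
      map_smul' := fun c a => Subtype.ext (map_smul _ c a) }
  have hii : LinearMap.range (JZH.ιmap k A B X (m+2)) = N (fun _ => false) := by
    rw [(hsl _).1]
    refine JZHaux.range_retract (X := X) (n := m+2) (p false) B.val.toLinearMap g ?_ ?_
    · ext b
      change p false b.1 = b.1
      rw [hpf, hπB b.1 b.2, map_zero, sub_zero]
    · ext a
      rfl
  refine ⟨?_, hii, ?_⟩
  · exact JZHaux.abs_i κ P N (fun _ => true) hN hP hid hk _ hf
  · rw [hii]
    exact JZHaux.abs_iii κ P N (fun _ => true) (fun _ => false)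
      (fun h => by simpa using congrFun h 0) hN hP hid horth hk _
      (fun e => by rw [ht, hf, and_comm])
end

section
/- Let B ⊆ A be an extension of finite-dimensional k-algebras and X a finite-dimensional A-bimodule. Then in degree 1 the Jacobi-Zariski long nearly exact sequence is exact and ends surjectively: the map K : H_1(A,X) → H_1(A|B,X) is surjective and Ker K = Im(I : H_1(B,X) → H_1(A,X)). -/
open scoped TensorProduct
open MulOpposite PiTensorProduct

namespace JZ

variable (k : Type) [Field k]
variable (C : ℕ → Type) [∀ n, AddCommGroup (C n)] [∀ n, Module k (C n)]
variable (D : ℕ → Type) [∀ n, AddCommGroup (D n)] [∀ n, Module k (D n)]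

/-- Homology in degree `n+1` of a (raw) nonnegatively graded chain complex given by its
differentials `d n : C (n+1) →ₗ[k] C n`. -/
def homologySucc (d : ∀ n, C (n+1) →ₗ[k] C n) (n : ℕ) : Type :=
  LinearMap.ker (d n) ⧸
    (LinearMap.range (d (n+1))).comap (LinearMap.ker (d n)).subtype

instance homologySuccAddCommGroup (d : ∀ n, C (n+1) →ₗ[k] C n) (n : ℕ) :
    AddCommGroup (homologySucc k C d n) :=
  inferInstanceAs (AddCommGroup (_ ⧸ _))

instance homologySuccModule (d : ∀ n, C (n+1) →ₗ[k] C n) (n : ℕ) :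
    Module k (homologySucc k C d n) :=
  inferInstanceAs (Module k (_ ⧸ _))

/-- Homology in degree `0`. -/
def homologyZero (d : ∀ n, C (n+1) →ₗ[k] C n) : Type :=
  C 0 ⧸ LinearMap.range (d 0)

instance homologyZeroAddCommGroup (d : ∀ n, C (n+1) →ₗ[k] C n) :
    AddCommGroup (homologyZero k C d) := inferInstanceAs (AddCommGroup (_ ⧸ _))

instance homologyZeroModule (d : ∀ n, C (n+1) →ₗ[k] C n) :
    Module k (homologyZero k C d) := inferInstanceAs (Module k (_ ⧸ _))

/-- Homology in every degree. -/
def homology (d : ∀ n, C (n+1) →ₗ[k] C n) : ℕ → Type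
  | 0 => homologyZero k C d
  | n+1 => homologySucc k C d n

instance homologyAddCommGroup (d : ∀ n, C (n+1) →ₗ[k] C n) (n : ℕ) :
    AddCommGroup (homology k C d n) := by
  cases n with
  | zero => exact inferInstanceAs (AddCommGroup (homologyZero k C d))
  | succ n => exact inferInstanceAs (AddCommGroup (homologySucc k C d n))

instance homologyModule (d : ∀ n, C (n+1) →ₗ[k] C n) (n : ℕ) :
    Module k (homology k C d n) := by
  cases n with
  | zero => exact inferInstanceAs (Module k (homologyZero k C d))
  | succ n => exact inferInstanceAs (Module k (homologySucc k C d n))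

variable {k C D}

/-- The map induced in positive-degree homology by a chain map. -/
noncomputable def inducedSucc (dC : ∀ n, C (n+1) →ₗ[k] C n) (dD : ∀ n, D (n+1) →ₗ[k] D n)
    (f : ∀ n, C n →ₗ[k] D n)
    (hsq : ∀ n, (dD n).comp (f (n+1)) = (f n).comp (dC n)) (n : ℕ) :
    homologySucc k C dC n →ₗ[k] homologySucc k D dD n :=
  Submodule.mapQ _ _
    ((f (n+1)).restrict (p := LinearMap.ker (dC n)) (q := LinearMap.ker (dD n))
      (fun x hx => by
        have := congrArg (fun g => g x) (hsq n)
        simp only [LinearMap.comp_apply] at this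
        simp only [LinearMap.mem_ker] at hx ⊢
        rw [this, hx, map_zero]))
    (by
      rintro ⟨x, hxk⟩ hx
      simp only [Submodule.mem_comap, LinearMap.mem_range, Submodule.coe_subtype] at hx ⊢
      obtain ⟨y, hy⟩ := hx
      refine ⟨f (n+2) y, ?_⟩
      have := congrArg (fun g => g y) (hsq (n+1))
      simp only [LinearMap.comp_apply] at this
      simp only [LinearMap.restrict_coe_apply]
      rw [this, hy])

/-- The map induced in degree-0 homology by a chain map. -/
noncomputable def inducedZero (dC : ∀ n, C (n+1) →ₗ[k] C n) (dD : ∀ n, D (n+1) →ₗ[k] D n)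
    (f : ∀ n, C n →ₗ[k] D n)
    (hsq : ∀ n, (dD n).comp (f (n+1)) = (f n).comp (dC n)) :
    homologyZero k C dC →ₗ[k] homologyZero k D dD :=
  Submodule.mapQ _ _ (f 0)
    (by
      rintro x ⟨y, rfl⟩
      have := congrArg (fun g => g y) (hsq 0)
      simp only [LinearMap.comp_apply] at this
      exact ⟨f 1 y, this⟩)

/-- The map induced in homology by a chain map, in every degree. -/
noncomputable def induced (dC : ∀ n, C (n+1) →ₗ[k] C n) (dD : ∀ n, D (n+1) →ₗ[k] D n)
    (f : ∀ n, C n →ₗ[k] D n)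
    (hsq : ∀ n, (dD n).comp (f (n+1)) = (f n).comp (dC n)) :
    ∀ n, homology k C dC n →ₗ[k] homology k D dD n
  | 0 => inducedZero dC dD f hsq
  | n+1 => inducedSucc dC dD f hsq n

end JZ

namespace JZH

section helpers

variable {k : Type} [Field k]

theorem tp_const {M : Type} [AddCommGroup M] [Module k M] (u : Fin 1 → M) :
    tprod k u = tprod k (fun _ : Fin 1 => u 0) := by
  congr 1
  funext i
  rw [Subsingleton.elim i 0]

theorem tp_sub {M : Type} [AddCommGroup M] [Module k M] (u v : M) :
    (tprod k (fun _ : Fin 1 => u)) - tprod k (fun _ : Fin 1 => v)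
      = tprod k (fun _ : Fin 1 => u - v) := by
  rw [← subsingletonEquiv_symm_apply' (R := k) (0 : Fin 1) u,
    ← subsingletonEquiv_symm_apply' (R := k) (0 : Fin 1) v,
    ← subsingletonEquiv_symm_apply' (R := k) (0 : Fin 1) (u - v), map_sub]

theorem tp_zero {M : Type} [AddCommGroup M] [Module k M] :
    tprod k (fun _ : Fin 1 => (0 : M)) = 0 :=
  (PiTensorProduct.tprod k).map_coord_zero (0 : Fin 1) rfl

theorem ind1 {X M : Type} [AddCommGroup X] [Module k X] [AddCommGroup M] [Module k M] {n : ℕ}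
    (P : Submodule k (X ⊗[k] (⨂[k] (_ : Fin n), M)))
    (h : ∀ (x : X) (a : Fin n → M), x ⊗ₜ[k] tprod k a ∈ P) (w) : w ∈ P := by
  induction w with
  | zero => exact P.zero_mem
  | add x y hx hy => exact P.add_mem hx hy
  | tmul x t =>
    induction t using PiTensorProduct.induction_on with
    | smul_tprod r f => rw [TensorProduct.tmul_smul]; exact P.smul_mem _ (h _ _)
    | add a b ha hb => rw [TensorProduct.tmul_add]; exact P.add_mem ha hb

variable {A : Type} [Ring A] [Algebra k A] {B : Subalgebra k A}
variable {X : Type} [AddCommGroup X] [Module k X]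

/-- `id ⊗ π`. -/
noncomputable def pA (k : Type) [Field k] (A : Type) [Ring A] [Algebra k A] (B : Subalgebra k A)
    (X : Type) [AddCommGroup X] [Module k X] (n : ℕ) :
    (X ⊗[k] (⨂[k] (_ : Fin n), A)) →ₗ[k] (X ⊗[k] (⨂[k] (_ : Fin n), QM k A B)) :=
  TensorProduct.map LinearMap.id (PiTensorProduct.map fun _ => πQ k A B)

/-- `id ⊗ inclusion`. -/
noncomputable def iA (k : Type) [Field k] (A : Type) [Ring A] [Algebra k A] (B : Subalgebra k A)
    (X : Type) [AddCommGroup X] [Module k X] (n : ℕ) :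
    (X ⊗[k] (⨂[k] (_ : Fin n), B)) →ₗ[k] (X ⊗[k] (⨂[k] (_ : Fin n), A)) :=
  TensorProduct.map LinearMap.id (PiTensorProduct.map fun _ => B.val.toLinearMap)

/-- `id ⊗ σ`. -/
noncomputable def sA (X : Type) [AddCommGroup X] [Module k X]
    (σ : QM k A B →ₗ[k] A) (n : ℕ) :
    (X ⊗[k] (⨂[k] (_ : Fin n), QM k A B)) →ₗ[k] (X ⊗[k] (⨂[k] (_ : Fin n), A)) :=
  TensorProduct.map LinearMap.id (PiTensorProduct.map fun _ => σ)

theorem pA_tmul (n : ℕ) (x : X) (a : Fin n → A) :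
    pA k A B X n (x ⊗ₜ[k] tprod k a) = x ⊗ₜ[k] tprod k (fun i => πQ k A B (a i)) := by
  simp [pA, PiTensorProduct.map_tprod]

theorem iA_tmul (n : ℕ) (x : X) (a : Fin n → B) :
    iA k A B X n (x ⊗ₜ[k] tprod k a) = x ⊗ₜ[k] tprod k (fun i => (a i : A)) := by
  simp [iA, PiTensorProduct.map_tprod]

theorem sA_tmul (σ : QM k A B →ₗ[k] A) (n : ℕ) (x : X) (a : Fin n → QM k A B) :
    sA X σ n (x ⊗ₜ[k] tprod k a) = x ⊗ₜ[k] tprod k (fun i => σ (a i)) := by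
  simp [sA, PiTensorProduct.map_tprod]

theorem pi_eq_zero {a : A} (h : πQ k A B a = 0) : a ∈ B := by
  have : a ∈ Subalgebra.toSubmodule B := (Submodule.Quotient.mk_eq_zero _).1 h
  simpa using this

theorem pi_coe (b : B) : πQ k A B (b : A) = 0 :=
  (Submodule.Quotient.mk_eq_zero _).2 b.2

variable {σ : QM k A B →ₗ[k] A}

theorem psA (hσ : ∀ q, πQ k A B (σ q) = q) (n : ℕ) (w) : pA k A B X n (sA X σ n w) = w := by
  have := ind1 (LinearMap.ker ((pA k A B X n).comp (sA X σ n) - LinearMap.id)) (fun x a => by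
    simp [sA_tmul, pA_tmul, hσ]) w
  simpa [sub_eq_zero] using this

theorem decomp (hσ : ∀ q, πQ k A B (σ q) = q) (w) :
    w - sA X σ 1 (pA k A B X 1 w) ∈ LinearMap.range (iA k A B X 1) := by
  have := ind1 ((LinearMap.range (iA k A B X 1)).comap
      (LinearMap.id - (sA X σ 1).comp (pA k A B X 1))) (fun x a => by
    simp only [Submodule.mem_comap, LinearMap.sub_apply, LinearMap.id_apply,
      LinearMap.comp_apply, pA_tmul, sA_tmul]
    rw [tp_const a, tp_const (fun i => σ _), ← TensorProduct.tmul_sub, tp_sub]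
    have hm : a 0 - σ (πQ k A B (a 0)) ∈ B := pi_eq_zero (by rw [map_sub, hσ, sub_self])
    exact ⟨x ⊗ₜ tprod k (fun _ => ⟨_, hm⟩), by rw [iA_tmul]⟩) w
  simpa using this

theorem pA_iA (w) : pA k A B X 1 (iA k A B X 1 w) = 0 := by
  have := ind1 (LinearMap.ker ((pA k A B X 1).comp (iA k A B X 1))) (fun x a => by
    simp only [LinearMap.mem_ker, LinearMap.comp_apply, iA_tmul, pA_tmul, pi_coe]
    rw [tp_zero, TensorProduct.tmul_zero]) w
  simpa using this

variable [Module A X] [Module Aᵐᵒᵖ X]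

theorem d1 (bA : ∀ n, CH k A X (n+1) →ₗ[k] CH k A X n) (hbA : IsHochschildDiff k A X bA)
    (x : X) (a b : A) :
    bA 1 (x ⊗ₜ[k] tprod k (![a, b] : Fin 2 → A)) =
      (((op a • x) ⊗ₜ[k] (tprod k fun _ : Fin 1 => b) - x ⊗ₜ[k] (tprod k fun _ : Fin 1 => a * b)
        + (b • x) ⊗ₜ[k] (tprod k fun _ : Fin 1 => a) : X ⊗[k] (⨂[k] (_ : Fin 1), A))) := by
  refine (hbA.2 0 x ![a, b]).trans ?_
  have e1 : (fun i : Fin 1 => (![a, b] : Fin 2 → A) i.succ) = fun _ => b := by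
    funext i; rw [Subsingleton.elim i 0]; rfl
  have e2 : (fun i : Fin 1 => (![a, b] : Fin 2 → A) i.castSucc) = fun _ => a := by
    funext i; rw [Subsingleton.elim i 0]; rfl
  have e3 : mergeFun (fun y z => y * z) (![a, b] : Fin 2 → A) (0 : Fin 1) = fun _ => a * b := by
    funext i; rw [Subsingleton.elim i 0]; rfl
  have e0 : hochSucc k A X 0 x ![a, b] =
    ((op a • x) ⊗ₜ[k] (tprod k fun i : Fin 1 => (![a, b] : Fin 2 → A) i.succ)
    + ∑ j : Fin 1, ((-1 : ℤ) ^ ((j : ℕ) + 1)) •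
      (x ⊗ₜ[k] (tprod k (mergeFun (fun y z => y * z) (![a, b] : Fin 2 → A) j)))
    + ((-1 : ℤ) ^ (0 + 2)) • ((b • x) ⊗ₜ[k]
      (tprod k fun i : Fin 1 => (![a, b] : Fin 2 → A) i.castSucc)) :
      X ⊗[k] (⨂[k] (_ : Fin 1), A)) := rfl
  refine e0.trans ?_
  rw [e1, e2, Fin.sum_univ_one, e3]
  simp [sub_eq_add_neg]
  rfl

theorem key (hσ : ∀ q, πQ k A B (σ q) = q)
    (bA : ∀ n, CH k A X (n+1) →ₗ[k] CH k A X n) (hbA : IsHochschildDiff k A X bA)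
    (w : X ⊗[k] (⨂[k] (_ : Fin 1), A))
    (hw : pA k A B X 1 w ∈ relRel k A B X 0) :
    ∃ (u : X ⊗[k] (⨂[k] (_ : Fin 1), B)) (v : CH k A X 2),
      w = iA k A B X 1 u + (show X ⊗[k] (⨂[k] (_ : Fin 1), A) from bA 1 v) := by
  let d : CH k A X 2 →ₗ[k] (X ⊗[k] (⨂[k] (_ : Fin 1), A)) := bA 1
  have hle : relRel k A B X 0 ≤ Submodule.map (pA k A B X 1)
      (LinearMap.range (iA k A B X 1) ⊔ LinearMap.range d) := by
    refine Submodule.span_le.2 ?_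
    rintro z ((⟨x, α, b, rfl⟩ | ⟨x, α, b, i, rfl⟩) | ⟨x, α, b, rfl⟩)
    · refine ⟨iA k A B X 1 (-((σ (α 0) • x) ⊗ₜ[k] tprod k (fun _ : Fin 1 => b))) +
        d (x ⊗ₜ[k] tprod k (![(b : A), σ (α 0)] : Fin 2 → A)),
        Submodule.add_mem_sup ⟨_, rfl⟩ ⟨_, rfl⟩, ?_⟩
      have hd : d (x ⊗ₜ[k] tprod k (![(b : A), σ (α 0)] : Fin 2 → A)) = _ := d1 bA hbA x _ _
      rw [map_add, pA_iA, hd, zero_add, map_add, map_sub, pA_tmul, pA_tmul, pA_tmul, hσ,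
        pi_coe, tp_zero, TensorProduct.tmul_zero,
        add_zero, ← tp_const α, tp_const (Function.update _ _ _), Function.update_self]
      have : πQ k A B ((b : A) * σ (α 0)) = Ql k A B b (α 0) := by
        conv_rhs => rw [← hσ (α 0)]
        rfl
      rw [this]
    · exact i.elim0
    · refine ⟨iA k A B X 1 ((op (σ (α 0)) • x) ⊗ₜ[k] tprod k (fun _ : Fin 1 => b)) +
        d (-(x ⊗ₜ[k] tprod k (![σ (α 0), (b : A)] : Fin 2 → A))),
        Submodule.add_mem_sup ⟨_, rfl⟩ ⟨_, rfl⟩, ?_⟩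
      have hd : d (x ⊗ₜ[k] tprod k (![σ (α 0), (b : A)] : Fin 2 → A)) = _ := d1 bA hbA x _ _
      have hd' : d (-(x ⊗ₜ[k] tprod k (![σ (α 0), (b : A)] : Fin 2 → A))) = _ :=
        (map_neg d _).trans (congrArg Neg.neg hd)
      rw [map_add, pA_iA, hd', zero_add, map_neg, map_add, map_sub, pA_tmul, pA_tmul, pA_tmul, hσ,
        pi_coe, tp_zero, TensorProduct.tmul_zero,
        ← tp_const α, tp_const (Function.update _ _ _)]
      have : πQ k A B (σ (α 0) * (b : A)) = Qr k A B b (α 0) := by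
        conv_rhs => rw [← hσ (α 0)]
        rfl
      rw [this]
      have e : Function.update α (Fin.last 0) (Qr k A B b (α (Fin.last 0))) 0
        = Qr k A B b (α 0) := by simp
      rw [e]
      abel
  obtain ⟨s, hs, hps⟩ := hle hw
  have h0 := decomp (X := X) hσ (w - s)
  rw [map_sub, hps, sub_self, map_zero, sub_zero] at h0
  have hw' : w ∈ LinearMap.range (iA k A B X 1) ⊔ LinearMap.range d := by
    have := Submodule.add_mem _ (Submodule.mem_sup_left h0 :
      w - s ∈ LinearMap.range (iA k A B X 1) ⊔ LinearMap.range d) hs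
    simpa using this
  obtain ⟨_, ⟨u, rfl⟩, _, ⟨v, rfl⟩, h⟩ := Submodule.mem_sup.1 hw'
  exact ⟨u, v, h.symm⟩

theorem kappa_surj (hσ : ∀ q, πQ k A B (σ q) = q) (n : ℕ) (v : RC k A B X (n+1)) :
    ∃ w, κmap k A B X (n+1) w = v := by
  obtain ⟨v', rfl⟩ := Submodule.mkQ_surjective (relRel k A B X n) v
  exact ⟨sA X σ (n+1) v', congrArg (mkRC k A B X n) (psA hσ (n+1) v')⟩

theorem kappa_iota (u : CHB k A B X 1) : κmap k A B X 1 (ιmap k A B X 1 u) = 0 :=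
  (congrArg (mkRC k A B X 0) (pA_iA u)).trans (map_zero _)

theorem comm_lift (bB : ∀ n, CHB k A B X (n+1) →ₗ[k] CHB k A B X n)
    (hbB : IsHochschildDiffB k A B X bB) (x : X) (hx : x ∈ commRel k A B X) :
    ∃ u : CHB k A B X 1, bB 0 u = x := by
  let d : CHB k A B X 1 →ₗ[k] X := bB 0
  have : commRel k A B X ≤ LinearMap.range d := by
    refine Submodule.span_le.2 ?_
    rintro z ⟨b, x, rfl⟩
    refine ⟨-(x ⊗ₜ[k] tprod k (fun _ : Fin 1 => b) : X ⊗[k] (⨂[k] (_ : Fin 1), B)), ?_⟩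
    have h : d (x ⊗ₜ[k] tprod k (fun _ : Fin 1 => b) : X ⊗[k] (⨂[k] (_ : Fin 1), B)) =
      (op (b : A) • x) - (b : A) • x := hbB.1 x _
    refine (map_neg d _).trans ?_
    rw [h, neg_sub]
  exact this hx

end helpers

end JZH

/-- **Statement 19.** For an extension `B ⊆ A` of finite-dimensional `k`-algebras and a
finite-dimensional `A`-bimodule `X`, the Jacobi-Zariski long nearly exact sequence is exact in
degree `1` and ends surjectively: `K : H_1(A,X) → H_1(A|B,X)` is surjective and
`Ker K = Im (I : H_1(B,X) → H_1(A,X))`. -/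
theorem jacobi_zariski_exact_and_surjective_in_degree_one_of_finite_dimensional
    (k : Type) [Field k] (A : Type) [Ring A] [Algebra k A] [FiniteDimensional k A]
    (B : Subalgebra k A)
    (X : Type) [AddCommGroup X] [Module k X] [FiniteDimensional k X]
    [Module A X] [Module Aᵐᵒᵖ X] [SMulCommClass A Aᵐᵒᵖ X]
    [IsScalarTower k A X] [IsScalarTower k Aᵐᵒᵖ X]
    (σ : JZH.QM k A B →ₗ[k] A) (hσ : (JZH.πQ k A B).comp σ = LinearMap.id)
    (bB : ∀ n, JZH.CHB k A B X (n+1) →ₗ[k] JZH.CHB k A B X n)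
    (hbB : JZH.IsHochschildDiffB k A B X bB)
    (hbB2 : ∀ n, (bB n).comp (bB (n+1)) = 0)
    (bA : ∀ n, JZH.CH k A X (n+1) →ₗ[k] JZH.CH k A X n)
    (hbA : JZH.IsHochschildDiff k A X bA)
    (hbA2 : ∀ n, (bA n).comp (bA (n+1)) = 0)
    (bR : ∀ n, JZH.RC k A B X (n+1) →ₗ[k] JZH.RC k A B X n)
    (hbR : JZH.IsRelDiff k A B X σ bR)
    (hbR2 : ∀ n, (bR n).comp (bR (n+1)) = 0)
    (hsqι : ∀ n, (bA n).comp (JZH.ιmap k A B X (n+1)) = (JZH.ιmap k A B X n).comp (bB n))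
    (hsqκ : ∀ n, (bR n).comp (JZH.κmap k A B X (n+1)) = (JZH.κmap k A B X n).comp (bA n)) :
    Function.Surjective (JZ.inducedSucc bA bR (JZH.κmap k A B X) hsqκ 0) ∧
    LinearMap.ker (JZ.inducedSucc bA bR (JZH.κmap k A B X) hsqκ 0) =
      LinearMap.range (JZ.inducedSucc bB bA (JZH.ιmap k A B X) hsqι 0) := by
  have hσ' : ∀ q, JZH.πQ k A B (σ q) = q := fun q => LinearMap.congr_fun hσ q
  constructor
  · intro z
    obtain ⟨⟨z, hz⟩, rfl⟩ := Submodule.mkQ_surjective _ z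
    obtain ⟨w, rfl⟩ := JZH.kappa_surj hσ' 0 z
    have h1 : JZH.κmap k A B X 0 (bA 0 w) = 0 :=
      (LinearMap.congr_fun (hsqκ 0) w).symm.trans hz
    have h2 : (bA 0 w : X) ∈ JZH.commRel k A B X := (Submodule.Quotient.mk_eq_zero _).1 h1
    obtain ⟨u, hu⟩ := JZH.comm_lift bB hbB _ h2
    have h3 : bA 0 (JZH.ιmap k A B X 1 u) = bA 0 w :=
      (LinearMap.congr_fun (hsqι 0) u).trans hu
    have h4 : bA 0 (w - JZH.ιmap k A B X 1 u) = 0 := by rw [map_sub, h3, sub_self]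
    refine ⟨Submodule.Quotient.mk ⟨w - JZH.ιmap k A B X 1 u, h4⟩, ?_⟩
    refine congrArg Submodule.Quotient.mk (Subtype.ext ?_)
    change JZH.κmap k A B X 1 (w - JZH.ιmap k A B X 1 u) = _
    rw [map_sub, JZH.kappa_iota, sub_zero]
  · apply le_antisymm
    · intro z hz
      obtain ⟨⟨w, hw⟩, rfl⟩ := Submodule.mkQ_surjective _ z
      have hz' : (JZH.κmap k A B X 1 w) ∈ LinearMap.range (bR 1) := by
        have hz2 := LinearMap.mem_ker.1 hz
        exact (Submodule.Quotient.mk_eq_zero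
          ((LinearMap.range (bR 1)).comap (LinearMap.ker (bR 0)).subtype)).1 hz2
      obtain ⟨v, hv⟩ := hz'
      obtain ⟨v', rfl⟩ := JZH.kappa_surj hσ' 1 v
      have h1 : JZH.κmap k A B X 1 (bA 1 v') = JZH.κmap k A B X 1 w :=
        (LinearMap.congr_fun (hsqκ 1) v').symm.trans hv
      have h2 : JZH.κmap k A B X 1 (w - bA 1 v') = 0 := by rw [map_sub, h1, sub_self]
      obtain ⟨u, t, ht⟩ := JZH.key hσ' bA hbA (w - bA 1 v')
        ((Submodule.Quotient.mk_eq_zero _).1 h2)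
      have ht' : w - bA 1 v' = JZH.ιmap k A B X 1 u + bA 1 t := ht
      have hdd : ∀ y, bA 0 (bA 1 y) = 0 := fun y => LinearMap.congr_fun (hbA2 0) y
      have hw' : bA 0 w = 0 := hw
      have h3 : bA 0 (JZH.ιmap k A B X 1 u) = 0 := by
        have h := congrArg (bA 0) ht'
        rw [map_sub, map_add, hdd, hdd, hw', sub_zero, add_zero] at h
        exact h.symm
      have h4 : bB 0 u = 0 := (LinearMap.congr_fun (hsqι 0) u).symm.trans h3
      refine ⟨Submodule.Quotient.mk ⟨u, h4⟩, ?_⟩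
      refine (Submodule.Quotient.eq _).2 ?_
      refine ⟨-(v' + t), ?_⟩
      change bA 1 (-(v' + t)) = JZH.ιmap k A B X 1 u - w
      rw [map_neg, map_add, sub_eq_iff_eq_add.1 ht']
      abel
    · rintro _ ⟨z, rfl⟩
      obtain ⟨⟨u, hu⟩, rfl⟩ := Submodule.mkQ_surjective _ z
      refine LinearMap.mem_ker.2 ((Submodule.Quotient.mk_eq_zero _).2 ?_)
      refine ⟨0, ?_⟩
      change bR 1 0 = JZH.κmap k A B X 1 (JZH.ιmap k A B X 1 u)
      rw [JZH.kappa_iota, map_zero]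
end
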